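/- There exists an absolute constant c₀ > 0 such that the following holds. For any integers m ≥ 2, O ≥ S ≥ 8, A ≥ 3, any horizon H with H ≥ 8·log₂ S + 2m, any α ∈ (0, 0.1], and any T ≥ 1, there exists a finite family ℳ of finite episodic POMDPs with horizon H, with |𝒮| ≤ S, |𝒪| ≤ O, |𝒜| = A, each of which is m-step α-revealing, such that for every T-episode algorithm 𝔄: max_{M∈ℳ} E_M^𝔄[Regret] ≥ (c₀/m) · min{ (S·O^{1/2}·A^m·H/α²)^{1/3}·T^{2/3}, (S·A^{H/2}·H·T)^{1/2}, T }. -/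

import Mathlib

/-!
The lower bound comes from a family of combination lock instances whose lock can either be tested
directly, at a negligible cost and with negligible success, or through a costly and noisy signal.

**The instances** (`hardM`). The first part of an episode walks on `2 ^ k` visible register states, a
binary shift register, so that every register can be reached. Any non-shift action leaves the registers
and tosses a hidden coin. The coin is fair, except at one hidden location (step, register, action)
where it has bias `ε`. Afterwards a hidden password of `L` actions has to be entered; a wrong letter
rerandomizes the coin. The reward is the coin, shown at the last step, so the optimal value is
`1 / 2 + ε`, and any episode that misses the location or the password has value at most `1 / 2`.
Instead of going on, the learner may play one of the `r = A / 3` reveal actions. This shows one of `2 n`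
signals `(i, ±)`, whose sign agrees with a secret sign `v i` with correlation `±σ` given by the coin, and
then the episode is dead, with no reward.

**Revealing property** (`hardM_revealing`). The only invisible quantity is the sign of the coin. It is
recovered without bias, with magnitude `1 / σ`, from the observation that follows a reveal. Averaging
over all `r A ^ (m - 2)` action sequences that begin with a reveal gives a left inverse of norm
`1 / (σ √(r A ^ (m - 2)))`, which is `1 / α` for the right `σ`.

**Regret.** The posterior of the latent state is a function of the actions alone (`Filters`,
`hardM_filters`), so that an episode is a Markov-type product (`trajProb_eq_seqProd`), and
likelihood ratios against the null instance `ε = 0` are explicit products (`lik`). A reveal costs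
`1 / 2` on the null instance; on the instance `(θ, v)` every episode without the right location and
password costs `ε`. To distinguish `(θ, v)`, with `v` uniformly random, from the null one needs either
about `1 / ε²` episodes with the right password, or about `√n / (ε σ)²` reveals at the right location;
the factor `√n` appears because the signals of two random sign vectors are nearly uncorrelated
(`chi2_bound`). This is proved by a χ² bound for the mixture over `v` of the likelihood ratios, stopped
when one of these two budgets is exhausted (`core_one`). One episode tests one password, and one reveal
tests one of the `Nn ≈ S H A` locations, so averaging over `θ` (`core_two`) shows that either the null
instance suffers regret of order `Nn √n / (ε σ)²`, or some `(θ, v)` suffers regret of order `ε T`, as long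
as `ε² T` is at most a small multiple of the number of parameters `θ`, which exceeds a multiple of
`S H A ^ (H / 2)`. Taking `ε` as large as these constraints allow (`eps_choice`) gives the three terms of
the minimum (`family_bound`), even without the factor `1 / m`.
-/

open Finset

noncomputable section

/-- A finite episodic POMDP with horizon `H`, latent state space `S`, observation space `O`,
action space `A`.  Steps are indexed by `1, …, H` (paper convention). -/
structure POMDP (S O A : Type) [Fintype S] [Fintype O] [Fintype A] (H : ℕ) where
  init : S → ℝ
  init_nonneg : ∀ s, 0 ≤ init s
  init_sum : ∑ s, init s = 1
  trans : ℕ → S → A → S → ℝ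
  trans_nonneg : ∀ h s a s', 0 ≤ trans h s a s'
  trans_sum : ∀ h s a, ∑ s', trans h s a s' = 1
  emit : ℕ → S → O → ℝ
  emit_nonneg : ∀ h s o, 0 ≤ emit h s o
  emit_sum : ∀ h s, ∑ o, emit h s o = 1
  reward : ℕ → O → A → ℝ
  reward_nonneg : ∀ h o a, 0 ≤ reward h o a
  reward_le_one : ∀ h o a, reward h o a ≤ 1
  reward_total : ∀ τ : Fin H → O × A, ∑ h : Fin H, reward (h.1 + 1) (τ h).1 (τ h).2 ≤ 1

namespace POMDP

variable {S O A : Type} [Fintype S] [Fintype O] [Fintype A] {H : ℕ}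

/-- `emitActProb M m h s ω a` is the probability `ℙ_M(o_{h:h+m−1} = ω | s_h = s,
a_{h:h+m−2} = a)` of observing the sequence `ω ∈ 𝒪^m` when the latent state at (1-based)
step `h` is `s` and the action sequence `a ∈ 𝒜^{m−1}` is executed. -/
def emitActProb (M : POMDP S O A H) : (m : ℕ) → ℕ → S → (Fin m → O) → (Fin (m - 1) → A) → ℝ
  | 0, _, _, _, _ => 1
  | 1, h, s, ω, _ => M.emit h s (ω 0)
  | m + 2, h, s, ω, a =>
    M.emit h s (ω 0) *
      ∑ s' : S, M.trans h s (a ⟨0, Nat.succ_pos m⟩) s' *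
        emitActProb M (m + 1) (h + 1) s' (fun i => ω i.succ) (fun i => a i.succ)

/-- The `m`-step emission–action matrix `𝕄_{h,m}` (`h` is the 1-based step index). -/
def emitActMatrix (M : POMDP S O A H) (h m : ℕ) :
    Matrix ((Fin m → O) × (Fin (m - 1) → A)) S ℝ :=
  Matrix.of fun p s => M.emitActProb m h s p.1 p.2

/-- The set of columns of the step-(h−1) transition matrix `𝕋_{h−1}`
(the single column `μ₁` when `h = 1`). -/
def stepCols (M : POMDP S O A H) (h : ℕ) : Set (S → ℝ) :=
  if h = 1 then {fun s => M.init s}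
  else {c | ∃ s' a', c = fun s => M.trans (h - 1) s' a' s}

/-- `B` is a generalized left inverse of `𝕄_{h,m}`, i.e. `B · 𝕄_{h,m} · 𝕋_{h−1} = 𝕋_{h−1}`. -/
def IsGenLeftInv (M : POMDP S O A H) (h m : ℕ)
    (B : Matrix S ((Fin m → O) × (Fin (m - 1) → A)) ℝ) : Prop :=
  ∀ c ∈ M.stepCols h, (B * M.emitActMatrix h m).mulVec c = c

end POMDP

/-- The star-norm `‖x‖_* = (Σ_a (Σ_ω |x(ω,a)|)²)^{1/2}`. -/
def starNorm {ι κ : Type} [Fintype ι] [Fintype κ] (x : ι × κ → ℝ) : ℝ :=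
  Real.sqrt (∑ a : κ, (∑ ω : ι, |x (ω, a)|) ^ 2)

/-- The `(*→1)`-operator norm `‖B‖_{*→1} = max_{‖x‖_* ≤ 1} ‖Bx‖₁`. -/
def opNormStarOne {S ι κ : Type} [Fintype S] [Fintype ι] [Fintype κ]
    (B : Matrix S (ι × κ) ℝ) : ℝ :=
  sSup {y | ∃ x : ι × κ → ℝ, starNorm x ≤ 1 ∧ y = ∑ s, |B.mulVec x s|}

/-- The `(1→1)`-operator norm `‖B‖_{1→1} = max_{‖y‖₁ ≤ 1} ‖By‖₁`. -/
def opNormOneOne {ι₁ ι₂ : Type} [Fintype ι₁] [Fintype ι₂] (B : Matrix ι₁ ι₂ ℝ) : ℝ :=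
  sSup {y | ∃ v : ι₂ → ℝ, (∑ i, |v i|) ≤ 1 ∧ y = ∑ j, |B.mulVec v j|}

namespace POMDP
variable {S O A : Type} [Fintype S] [Fintype O] [Fintype A] {H : ℕ}

/-- `M` is `m`-step `α`-revealing. -/
def IsRevealing (M : POMDP S O A H) (m : ℕ) (α : ℝ) : Prop :=
  ∀ h ∈ Finset.Icc 1 (H - m + 1),
    ∃ B : Matrix S ((Fin m → O) × (Fin (m - 1) → A)) ℝ,
      M.IsGenLeftInv h m B ∧ opNormStarOne B ≤ 1 / α

end POMDP

/-- A history-dependent policy: a distribution over actions for every (history, observation). -/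
structure Policy (O A : Type) [Fintype A] where
  act : List (O × A) → O → A → ℝ
  act_nonneg : ∀ τ o a, 0 ≤ act τ o a
  act_sum : ∀ τ o, ∑ a, act τ o a = 1

namespace POMDP
variable {S O A : Type} [Fintype S] [Fintype O] [Fintype A] {H : ℕ}

/-- The probability `ℙ_M^π(τ)` of a full trajectory `τ = (o_1,a_1,…,o_H,a_H)`. -/
def trajProb (M : POMDP S O A H) (π : Policy O A) (τ : Fin H → O × A) : ℝ :=
  ∑ s : Fin H → S, ∏ h : Fin H,
    (if h.1 = 0 then M.init (s h)
     else
       M.trans h.1 (s ⟨h.1 - 1, Nat.lt_of_le_of_lt (Nat.sub_le _ _) h.2⟩)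
         (τ ⟨h.1 - 1, Nat.lt_of_le_of_lt (Nat.sub_le _ _) h.2⟩).2 (s h)) *
    M.emit (h.1 + 1) (s h) (τ h).1 *
    π.act ((List.ofFn τ).take h.1) (τ h).1 (τ h).2

/-- The value `V_M(π)` of a policy. -/
def value (M : POMDP S O A H) (π : Policy O A) : ℝ :=
  ∑ τ : Fin H → O × A, M.trajProb π τ * ∑ h : Fin H, M.reward (h.1 + 1) (τ h).1 (τ h).2

/-- The optimal value `V_M⋆`. -/
def optValue (M : POMDP S O A H) : ℝ := ⨆ π : Policy O A, M.value π

end POMDP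

/-- A `T`-episode algorithm: a distribution over actions for every
(past episodes, within-episode history, current observation), and an output policy map. -/
structure Algorithm (O A : Type) [Fintype A] (H : ℕ) where
  act : List (Fin H → O × A) → List (O × A) → O → A → ℝ
  act_nonneg : ∀ past hist o a, 0 ≤ act past hist o a
  act_sum : ∀ past hist o, ∑ a, act past hist o a = 1
  out : List (Fin H → O × A) → Policy O A

/-- The policy executed by algorithm `𝔄` in the episode following the past episodes `past`. -/
def Algorithm.policyAt {O A : Type} [Fintype A] {H : ℕ} (𝔄 : Algorithm O A H)
    (past : List (Fin H → O × A)) : Policy O A :=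
  ⟨fun hist o a => 𝔄.act past hist o a, fun _ _ _ => 𝔄.act_nonneg _ _ _ _,
    fun _ _ => 𝔄.act_sum _ _ _⟩

namespace POMDP
variable {S O A : Type} [Fintype S] [Fintype O] [Fintype A] {H : ℕ}

/-- The law `ℙ_M^𝔄` of the transcript `(τ^{(1)},…,τ^{(T)})`. -/
def transcriptProb (M : POMDP S O A H) (𝔄 : Algorithm O A H) {T : ℕ}
    (τs : Fin T → Fin H → O × A) : ℝ :=
  ∏ t : Fin T, M.trajProb (𝔄.policyAt ((List.ofFn τs).take t.1)) (τs t)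

open Classical in
/-- `ℙ_M^𝔄(V_M⋆ − V_M(π^out) < ε)`. -/
def pacProb (M : POMDP S O A H) (𝔄 : Algorithm O A H) (T : ℕ) (ε : ℝ) : ℝ :=
  ∑ τs : Fin T → Fin H → O × A,
    if M.optValue - M.value (𝔄.out (List.ofFn τs)) < ε then M.transcriptProb 𝔄 τs else 0

/-- The expected regret `E_M^𝔄[Σ_{t=1}^T (V_M⋆ − V_M(π^{(t)}))]`. -/
def expRegret (M : POMDP S O A H) (𝔄 : Algorithm O A H) (T : ℕ) : ℝ :=
  ∑ τs : Fin T → Fin H → O × A,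
    M.transcriptProb 𝔄 τs *
      ∑ t : Fin T, (M.optValue - M.value (𝔄.policyAt ((List.ofFn τs).take t.1)))

end POMDP

/-! ### Products, sums and expectations along sequences -/

section Seq
variable {X : Type}

/-- `∏ K (prefix) x` over the entries `x` of a list, where each factor also sees everything
before `x`, starting from an already processed prefix. -/
def seqProdFrom (K : List X → X → ℝ) : List X → List X → ℝ
  | _, [] => 1
  | p, x :: l => K p x * seqProdFrom K (p ++ [x]) l

/-- The probability of a list when each entry is drawn from the kernel `K` given the entries
before it. `K` need not be a probability kernel: likelihood ratios are products of this form too. -/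
def seqProd (K : List X → X → ℝ) (l : List X) : ℝ := seqProdFrom K [] l

/-- Additive analogue of `seqProdFrom`. -/
def seqSumFrom (g : List X → X → ℝ) : List X → List X → ℝ
  | _, [] => 0
  | p, x :: l => g p x + seqSumFrom g (p ++ [x]) l

/-- Additive analogue of `seqProd`: the sum of `g (entries before x) x` over the entries `x`. -/
def seqSum (g : List X → X → ℝ) (l : List X) : ℝ := seqSumFrom g [] l

lemma seqProdFrom_concat (K : List X → X → ℝ) (l : List X) (x : X) :
    ∀ p, seqProdFrom K p (l ++ [x]) = seqProdFrom K p l * K (p ++ l) x := by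
  induction l with
  | nil => intro p; simp [seqProdFrom]
  | cons y l ih => intro p; simp [seqProdFrom, ih, mul_assoc]

lemma seqSumFrom_concat (K : List X → X → ℝ) (l : List X) (x : X) :
    ∀ p, seqSumFrom K p (l ++ [x]) = seqSumFrom K p l + K (p ++ l) x := by
  induction l with
  | nil => intro p; simp [seqSumFrom]
  | cons y l ih => intro p; simp [seqSumFrom, ih, add_assoc]

@[simp] lemma seqProd_nil (K : List X → X → ℝ) : seqProd K [] = 1 := rfl

@[simp] lemma seqSum_nil (K : List X → X → ℝ) : seqSum K [] = 0 := rfl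

lemma seqProd_concat (K : List X → X → ℝ) (l : List X) (x : X) :
    seqProd K (l ++ [x]) = seqProd K l * K l x := by
  simpa [seqProd] using seqProdFrom_concat K l x []

lemma seqSum_concat (K : List X → X → ℝ) (l : List X) (x : X) :
    seqSum K (l ++ [x]) = seqSum K l + K l x := by
  simpa [seqSum] using seqSumFrom_concat K l x []

lemma seqProd_mul (K K' : List X → X → ℝ) (l : List X) :
    seqProd (fun p x => K p x * K' p x) l = seqProd K l * seqProd K' l := by
  induction l using List.reverseRecOn with
  | nil => simp
  | append_singleton l x ih => simp only [seqProd_concat, ih]; ring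

lemma seqProd_nonneg {K : List X → X → ℝ} (hK : ∀ p x, 0 ≤ K p x) (l : List X) :
    0 ≤ seqProd K l := by
  induction l using List.reverseRecOn with
  | nil => simp
  | append_singleton l x ih => rw [seqProd_concat]; exact mul_nonneg ih (hK _ _)

lemma ofFn_succ_concat {n : ℕ} (τ : Fin (n + 1) → X) :
    List.ofFn τ = List.ofFn (fun i : Fin n => τ i.castSucc) ++ [τ (Fin.last n)] := by
  rw [List.ofFn_succ', List.concat_eq_append]

lemma prod_take_eq_seqProd (K : List X → X → ℝ) :
    ∀ (n : ℕ) (τ : Fin n → X),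
      ∏ h : Fin n, K ((List.ofFn τ).take h.1) (τ h) = seqProd K (List.ofFn τ) := by
  intro n
  induction n with
  | zero => intro τ; simp
  | succ n ih =>
    intro τ
    rw [Fin.prod_univ_castSucc, ofFn_succ_concat, seqProd_concat, ← ih]
    congr 1
    · refine Finset.prod_congr rfl fun h _ => ?_
      rw [List.take_append_of_le_length (by simp)]
      simp
    · simp

lemma sum_take_eq_seqSum (K : List X → X → ℝ) :
    ∀ (n : ℕ) (τ : Fin n → X),
      ∑ h : Fin n, K ((List.ofFn τ).take h.1) (τ h) = seqSum K (List.ofFn τ) := by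
  intro n
  induction n with
  | zero => intro τ; simp
  | succ n ih =>
    intro τ
    rw [Fin.sum_univ_castSucc, ofFn_succ_concat, seqSum_concat, ← ih]
    congr 1
    · refine Finset.sum_congr rfl fun h _ => ?_
      rw [List.take_append_of_le_length (by simp)]
      simp
    · simp

variable [Fintype X]

/-- Expectation of `f` over lists of length `n` generated by the kernel `K`. It serves both for
the steps inside an episode and for the episodes inside a transcript. -/
def seqE (K : List X → X → ℝ) (n : ℕ) (f : List X → ℝ) : ℝ :=
  ∑ τ : Fin n → X, seqProd K (List.ofFn τ) * f (List.ofFn τ)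

@[simp] lemma seqE_zero (K : List X → X → ℝ) (f : List X → ℝ) : seqE K 0 f = f [] := by
  simp [seqE]

/-- Conditioning on all entries but the last one. -/
lemma seqE_succ (K : List X → X → ℝ) (n : ℕ) (f : List X → ℝ) :
    seqE K (n + 1) f = seqE K n fun l => ∑ x, K l x * f (l ++ [x]) := by
  unfold seqE
  rw [← (Fin.snocEquiv fun _ : Fin (n + 1) => X).sum_comp, Fintype.sum_prod_type_right]
  refine Finset.sum_congr rfl fun τ _ => ?_
  rw [Finset.mul_sum]
  refine Finset.sum_congr rfl fun x _ => ?_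
  rw [ofFn_succ_concat]
  simp [Fin.snocEquiv, seqProd_concat, mul_assoc]

lemma seqE_congr {K : List X → X → ℝ} {n : ℕ} {f g : List X → ℝ}
    (h : ∀ l, l.length = n → f l = g l) : seqE K n f = seqE K n g :=
  Finset.sum_congr rfl fun τ _ => by rw [h _ (by simp)]

lemma seqE_mono {K : List X → X → ℝ} (hK : ∀ p x, 0 ≤ K p x) {n : ℕ} {f g : List X → ℝ}
    (h : ∀ l, l.length = n → f l ≤ g l) : seqE K n f ≤ seqE K n g :=
  Finset.sum_le_sum fun τ _ =>
    mul_le_mul_of_nonneg_left (h _ (by simp)) (seqProd_nonneg hK _)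

lemma seqE_add (K : List X → X → ℝ) (n : ℕ) (f g : List X → ℝ) :
    seqE K n (fun l => f l + g l) = seqE K n f + seqE K n g := by
  simp [seqE, mul_add, Finset.sum_add_distrib]

lemma seqE_sub (K : List X → X → ℝ) (n : ℕ) (f g : List X → ℝ) :
    seqE K n (fun l => f l - g l) = seqE K n f - seqE K n g := by
  simp [seqE, mul_sub, Finset.sum_sub_distrib]

lemma seqE_const_mul (K : List X → X → ℝ) (n : ℕ) (c : ℝ) (f : List X → ℝ) :
    seqE K n (fun l => c * f l) = c * seqE K n f := by
  simp [seqE, Finset.mul_sum, mul_left_comm]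

lemma seqE_sum {ι : Type*} (s : Finset ι) (K : List X → X → ℝ) (n : ℕ) (f : ι → List X → ℝ) :
    seqE K n (fun l => ∑ i ∈ s, f i l) = ∑ i ∈ s, seqE K n (f i) := by
  simp only [seqE, Finset.mul_sum]
  rw [Finset.sum_comm]

lemma seqE_one {K : List X → X → ℝ} (hK1 : ∀ p, ∑ x, K p x = 1) (n : ℕ) :
    seqE K n (fun _ => 1) = 1 := by
  induction n with
  | zero => simp
  | succ n ih => rw [seqE_succ]; simpa [hK1] using ih

lemma seqE_const {K : List X → X → ℝ} (hK1 : ∀ p, ∑ x, K p x = 1) (n : ℕ) (c : ℝ) :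
    seqE K n (fun _ => c) = c := by
  have := seqE_const_mul K n c (fun _ => 1)
  simpa [seqE_one hK1] using this

/-- Change of measure: multiplying the kernel by `R` reweights the law by `seqProd R`. -/
lemma seqE_mul (K R : List X → X → ℝ) (n : ℕ) (f : List X → ℝ) :
    seqE (fun p x => K p x * R p x) n f = seqE K n fun l => seqProd R l * f l := by
  simp [seqE, seqProd_mul, mul_assoc]

/-- A product of factors of conditional mean at most one is a supermartingale. -/
lemma seqE_prod_le_one {K Y : List X → X → ℝ} (hK : ∀ p x, 0 ≤ K p x) (hY : ∀ p x, 0 ≤ Y p x)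
    (h : ∀ p, ∑ x, K p x * Y p x ≤ 1) (n : ℕ) : seqE K n (seqProd Y) ≤ 1 := by
  induction n with
  | zero => simp
  | succ n ih =>
    rw [seqE_succ]
    refine le_trans (seqE_mono hK fun l _ => ?_) ih
    simp only [seqProd_concat]
    calc ∑ x, K l x * (seqProd Y l * Y l x) = seqProd Y l * ∑ x, K l x * Y l x := by
          rw [Finset.mul_sum]; exact Finset.sum_congr rfl fun x _ => by ring
      _ ≤ seqProd Y l * 1 := mul_le_mul_of_nonneg_left (h l) (seqProd_nonneg hY l)
      _ = seqProd Y l := mul_one _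

lemma seqE_prod_eq_one {K Y : List X → X → ℝ} (h : ∀ p, ∑ x, K p x * Y p x = 1) (n : ℕ) :
    seqE K n (seqProd Y) = 1 := by
  have := seqE_mul K Y n (fun _ => 1)
  simp only [mul_one] at this
  rw [← seqE_one (K := fun p x => K p x * Y p x) h n, this]

lemma seqE_seqSum_le {K g g' : List X → X → ℝ} (hK : ∀ p x, 0 ≤ K p x)
    (hK1 : ∀ p, ∑ x, K p x = 1)
    (h : ∀ p, ∑ x, K p x * g p x ≤ ∑ x, K p x * g' p x) (n : ℕ) :
    seqE K n (seqSum g) ≤ seqE K n (seqSum g') := by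
  induction n with
  | zero => simp
  | succ n ih =>
    have key : ∀ g : List X → X → ℝ, seqE K (n + 1) (seqSum g) =
        seqE K n (seqSum g) + seqE K n (fun l => ∑ x, K l x * g l x) := by
      intro g
      rw [seqE_succ, ← seqE_add]
      congr 1; funext l
      simp only [seqSum_concat, mul_add, Finset.sum_add_distrib, ← Finset.sum_mul, hK1, one_mul]
    rw [key, key]
    exact add_le_add ih (seqE_mono hK fun l _ => h l)

end Seq

/-! ### POMDPs whose posterior is a function of the past actions -/

section Filter
variable {S O A U : Type}

/-- Run the deterministic update `step h u a` along the actions of a history, the first of which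
is taken at step `h`. -/
def runFrom (step : ℕ → U → A → U) : ℕ → U → List (O × A) → U
  | _, u, [] => u
  | h, u, x :: l => runFrom step (h + 1) (step h u x.2) l

lemma runFrom_concat (step : ℕ → U → A → U) (l : List (O × A)) (x : O × A) :
    ∀ h u, runFrom step h u (l ++ [x]) = step (h + l.length) (runFrom step h u l) x.2 := by
  induction l with
  | nil => intro h u; simp [runFrom]
  | cons y l ih =>
    intro h u
    simp only [List.cons_append, runFrom, ih, List.length_cons]
    congr 1; ring

/-- The value of the automaton `step` after a history that begins at step `1`. -/
def run (step : ℕ → U → A → U) (u₀ : U) (l : List (O × A)) : U := runFrom step 1 u₀ l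

@[simp] lemma run_nil (step : ℕ → U → A → U) (u₀ : U) :
    run (O := O) step u₀ [] = u₀ := rfl

lemma run_concat (step : ℕ → U → A → U) (u₀ : U) (l : List (O × A)) (x : O × A) :
    run step u₀ (l ++ [x]) = step (l.length + 1) (run step u₀ l) x.2 := by
  rw [run, runFrom_concat, add_comm]; rfl

variable [Fintype S] [Fintype O] [Fintype A]

/-- Law of the next observation-action pair given the history, when the observation law `q` depends
only on the step and on the current automaton value. -/
def histKernel (step : ℕ → U → A → U) (u₀ : U) (q : ℕ → U → O → ℝ) (π : Policy O A)
    (l : List (O × A)) (x : O × A) : ℝ :=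
  q (l.length + 1) (run step u₀ l) x.1 * π.act l x.1 x.2

variable {N : ℕ}

/-- The automaton `step` filters `M`: the posterior of the latent state given a history of positive
probability is `bel u`, where `u` is the automaton value, which depends on the actions only; the next
observation then has law `q h u`. -/
structure Filters (M : POMDP S O A (N + 1)) (step : ℕ → U → A → U) (u₀ : U)
    (bel : U → S → ℝ) (q : ℕ → U → O → ℝ) : Prop where
  init : ∀ s, M.init s = bel u₀ s
  step : ∀ h, 1 ≤ h → h ≤ N → ∀ u o a s',
    ∑ s, bel u s * M.emit h s o * M.trans h s a s' = q h u o * bel (step h u a) s'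
  last : ∀ u o, ∑ s, bel u s * M.emit (N + 1) s o = q (N + 1) u o

/-- Under a filter the sum over latent paths in the trajectory probability collapses to a product
of one-step factors. -/
theorem trajProb_eq_seqProd {M : POMDP S O A (N + 1)} {step : ℕ → U → A → U} {u₀ : U}
    {bel : U → S → ℝ} {q : ℕ → U → O → ℝ} (hF : Filters M step u₀ bel q)
    (π : Policy O A) (τ : Fin (N + 1) → O × A) :
    M.trajProb π τ = seqProd (histKernel step u₀ q π) (List.ofFn τ) := by
  obtain ⟨τ', hτ'⟩ : ∃ τ' : ℕ → O × A, ∀ h : Fin (N + 1), τ' h.1 = τ h :=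
    ⟨fun h => if hh : h < N + 1 then τ ⟨h, hh⟩ else τ 0, fun h => by simp only [h.2, dif_pos]⟩
  set lt := List.ofFn τ with hlt
  have hlen : lt.length = N + 1 := by simp [hlt]
  have htake : ∀ n, n ≤ N → lt.take (n + 1) = lt.take n ++ [τ' n] := by
    intro n hn
    have h1 : n < lt.length := by omega
    rw [List.take_succ_eq_append_getElem h1]
    congr 2
    rw [hτ' ⟨n, by omega⟩]
    simp only [hlt, List.getElem_ofFn]
  let KS : List S → S → ℝ := fun l s =>
    (match l.getLast? with
      | none => M.init s
      | some s' => M.trans l.length s' (τ' (l.length - 1)).2 s) *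
    M.emit (l.length + 1) s (τ' l.length).1 *
    π.act (lt.take l.length) (τ' l.length).1 (τ' l.length).2
  have h1 : M.trajProb π τ = seqE KS (N + 1) (fun _ => 1) := by
    unfold POMDP.trajProb seqE
    refine Finset.sum_congr rfl fun s _ => ?_
    rw [mul_one, ← prod_take_eq_seqProd]
    refine Finset.prod_congr rfl fun h _ => ?_
    have hl : ((List.ofFn s).take h.1).length = h.1 := by
      rw [List.length_take, List.length_ofFn]; omega
    simp only [KS, hl, hτ']
    congr 2
    rcases Nat.eq_zero_or_pos h.1 with h0 | h0
    · simp [h0]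
    · have hne : ¬ h.1 = 0 := by omega
      have : ((List.ofFn s).take h.1).getLast? =
          some (s ⟨h.1 - 1, Nat.lt_of_le_of_lt (Nat.sub_le _ _) h.2⟩) := by
        rw [List.getLast?_eq_getElem?, hl, List.getElem?_take_of_lt (by omega)]
        rw [List.getElem?_eq_getElem (by rw [List.length_ofFn]; omega)]
        simp only [List.getElem_ofFn]
      rw [this]
      simp only [hne, if_false]
      rw [← hτ' ⟨h.1 - 1, Nat.lt_of_le_of_lt (Nat.sub_le _ _) h.2⟩]
  have h2 : ∀ n, n ≤ N → ∀ φ : Option S → ℝ,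
      seqE KS (n + 1) (fun l => φ l.getLast?) =
        seqProd (histKernel step u₀ q π) (lt.take n) * π.act (lt.take n) (τ' n).1 (τ' n).2 *
          ∑ s, bel (run step u₀ (lt.take n)) s * M.emit (n + 1) s (τ' n).1 * φ (some s) := by
    intro n
    induction n with
    | zero =>
      intro _ φ
      rw [seqE_succ, seqE_zero, Finset.mul_sum]
      refine Finset.sum_congr rfl fun s _ => ?_
      simp [KS, hF.init]
      ring
    | succ n ih =>
      intro hn φ
      rw [seqE_succ]
      let φ' : Option S → ℝ := fun t => match t with
        | none => 0
        | some s' => ∑ s, M.trans (n + 1) s' (τ' n).2 s * M.emit (n + 2) s (τ' (n + 1)).1 *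
            π.act (lt.take (n + 1)) (τ' (n + 1)).1 (τ' (n + 1)).2 * φ (some s)
      have e1 : seqE KS (n + 1) (fun l => ∑ x, KS l x * φ (l ++ [x]).getLast?) =
          seqE KS (n + 1) (fun l => φ' l.getLast?) := by
        refine seqE_congr fun l hl => ?_
        obtain ⟨l', s', rfl⟩ : ∃ l' s', l = l' ++ [s'] := by
          rcases List.eq_nil_or_concat l with h | ⟨l', s', h⟩
          · simp [h] at hl
          · exact ⟨l', s', by simpa using h⟩
        have hl' : l'.length = n := by simpa using hl
        simp [KS, φ', hl']
      rw [e1, ih (by omega)]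
      simp only [φ']
      rw [htake n (by omega), seqProd_concat, run_concat]
      have hln : (lt.take n).length = n := by simp [hlen]; omega
      simp only [histKernel, hln]
      have e2 : ∑ s, bel (run step u₀ (lt.take n)) s * M.emit (n + 1) s (τ' n).1 *
          (∑ s_1, M.trans (n + 1) s (τ' n).2 s_1 * M.emit (n + 2) s_1 (τ' (n + 1)).1 *
            π.act (lt.take n ++ [τ' n]) (τ' (n + 1)).1 (τ' (n + 1)).2 * φ (some s_1)) =
          ∑ s_1, (q (n + 1) (run step u₀ (lt.take n)) (τ' n).1 *
            bel (step (n + 1) (run step u₀ (lt.take n)) (τ' n).2) s_1) *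
            (M.emit (n + 2) s_1 (τ' (n + 1)).1 *
            π.act (lt.take n ++ [τ' n]) (τ' (n + 1)).1 (τ' (n + 1)).2 * φ (some s_1)) := by
        simp_rw [← hF.step (n + 1) (by omega) (by omega), Finset.mul_sum, Finset.sum_mul]
        rw [Finset.sum_comm]
        refine Finset.sum_congr rfl fun s _ => Finset.sum_congr rfl fun s' _ => by ring
      rw [e2, Finset.mul_sum, Finset.mul_sum]
      refine Finset.sum_congr rfl fun s _ => by ring
  have h3 := h2 N le_rfl (fun _ => 1)
  rw [h1, h3]
  have : lt = lt.take N ++ [τ' N] := by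
    rw [← htake N le_rfl, List.take_of_length_le (by omega)]
  conv_rhs => rw [this, seqProd_concat]
  have hln : (lt.take N).length = N := by simp [hlen]
  simp only [histKernel, hln, mul_one, hF.last]
  ring

/-- Expectations of functions of an episode are `seqE`-expectations for the history kernel. -/
theorem sum_trajProb {M : POMDP S O A (N + 1)} {step : ℕ → U → A → U} {u₀ : U}
    {bel : U → S → ℝ} {q : ℕ → U → O → ℝ} (hF : Filters M step u₀ bel q)
    (π : Policy O A) (f : List (O × A) → ℝ) :
    ∑ τ, M.trajProb π τ * f (List.ofFn τ) = seqE (histKernel step u₀ q π) (N + 1) f := by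
  simp [seqE, trajProb_eq_seqProd hF]

lemma histKernel_sum (step : ℕ → U → A → U) (u₀ : U) (q : ℕ → U → O → ℝ) (π : Policy O A)
    (l : List (O × A)) (g : O → ℝ) :
    ∑ x, histKernel step u₀ q π l x * g x.1 = ∑ o, q (l.length + 1) (run step u₀ l) o * g o := by
  rw [Fintype.sum_prod_type]
  refine Finset.sum_congr rfl fun o _ => ?_
  simp only [histKernel]
  rw [← mul_one (q _ _ o * g o), ← π.act_sum l o, Finset.mul_sum]
  exact Finset.sum_congr rfl fun a _ => by ring

/-- The deterministic policy that plays the action `aseq h` at step `h` whatever the history. -/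
def openLoop [DecidableEq A] (aseq : ℕ → A) : Policy O A where
  act l _ a := if a = aseq (l.length + 1) then 1 else 0
  act_nonneg _ _ _ := by split_ifs <;> norm_num
  act_sum _ _ := by simp

/-- The automaton value after `n` steps of the open-loop play `aseq`. -/
def openMode (step : ℕ → U → A → U) (u₀ : U) (aseq : ℕ → A) : ℕ → U
  | 0 => u₀
  | n + 1 => step (n + 1) (openMode step u₀ aseq n) (aseq (n + 1))

lemma seqE_openLoop [DecidableEq A] (step : ℕ → U → A → U) (u₀ : U) (q : ℕ → U → O → ℝ)
    (hq : ∀ h u, ∑ o, q h u o = 1) (aseq : ℕ → A) (n : ℕ) :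
    ∀ G : U → ℝ, seqE (histKernel step u₀ q (openLoop aseq)) n (fun l => G (run step u₀ l)) =
      G (openMode step u₀ aseq n) := by
  induction n with
  | zero => intro G; simp [openMode]
  | succ n ih =>
    intro G
    rw [seqE_succ, openMode, ← ih (fun u => G (step (n + 1) u (aseq (n + 1))))]
    refine seqE_congr fun l hl => ?_
    simp only [run_concat, Fintype.sum_prod_type, histKernel, openLoop, hl]
    simp [← Finset.sum_mul, hq]

end Filter

/-! ### The change-of-measure argument for an abstract interaction -/

section Core
variable {X : Type}

/-- Total of `g` over a list; for a `{0, 1}`-valued `g` it counts episodes. -/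
def cnt (g : X → ℕ) (l : List X) : ℕ := (l.map g).sum

@[simp] lemma cnt_concat (g : X → ℕ) (l : List X) (x : X) :
    cnt g (l ++ [x]) = cnt g l + g x := by simp [cnt]

lemma cnt_le_length {g : X → ℕ} (hg : ∀ x, g x ≤ 1) (l : List X) : cnt g l ≤ l.length := by
  induction l using List.reverseRecOn with
  | nil => simp [cnt]
  | append_singleton l x ih => have := hg x; simp; omega

lemma cnt_eq_seqSum (g : X → ℕ) (l : List X) :
    (cnt g l : ℝ) = seqSum (fun _ x => (g x : ℝ)) l := by
  induction l using List.reverseRecOn with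
  | nil => simp [cnt]
  | append_singleton l x ih => simp [seqSum_concat, ih]

/-- Fewer than `n₁` episodes with flag `R` and fewer than `n₂` with flag `F` have occurred. -/
def IsActive (R F : X → ℕ) (n₁ n₂ : ℕ) (l : List X) : Prop := cnt R l < n₁ ∧ cnt F l < n₂

open Classical in
/-- The factor `y` as long as the budgets `n₁`, `n₂` are not exhausted, and `1` afterwards. Its
product is the likelihood ratio stopped at the first time a budget is used up. -/
def stoppedFactor (R F : X → ℕ) (n₁ n₂ : ℕ) (y : X → ℝ) (p : List X) (x : X) : ℝ :=
  if IsActive R F n₁ n₂ p then y x else 1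

lemma seqProd_stopped_of_active {R F : X → ℕ} {n₁ n₂ : ℕ} (y : X → ℝ) (l : List X)
    (h : IsActive R F n₁ n₂ l) :
    seqProd (stoppedFactor R F n₁ n₂ y) l = seqProd (fun _ x => y x) l := by
  induction l using List.reverseRecOn with
  | nil => simp
  | append_singleton l x ih =>
    have h' : IsActive R F n₁ n₂ l := by
      simp only [IsActive, cnt_concat] at h ⊢; omega
    rw [seqProd_concat, seqProd_concat, ih h']
    simp [stoppedFactor, h']

lemma seqProd_stopped_pow_le {R F : X → ℕ} (hR : ∀ x, R x ≤ 1) (hF : ∀ x, F x ≤ 1)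
    (n₁ n₂ : ℕ) {G D : ℝ} (hG : 1 ≤ G) (hD : 1 ≤ D) (l : List X) :
    seqProd (stoppedFactor R F n₁ n₂ fun x => G ^ R x * D ^ F x) l ≤ G ^ n₁ * D ^ n₂ := by
  have key : seqProd (stoppedFactor R F n₁ n₂ fun x => G ^ R x * D ^ F x) l ≤
      G ^ min (cnt R l) n₁ * D ^ min (cnt F l) n₂ := by
    induction l using List.reverseRecOn with
    | nil => simp [cnt]
    | append_singleton l x ih =>
      rw [seqProd_concat]
      by_cases h : IsActive R F n₁ n₂ l
      · have h1 := hR x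
        have h2 := hF x
        have e1 : min (cnt R (l ++ [x])) n₁ = min (cnt R l) n₁ + R x := by
          rw [cnt_concat]; have := h.1; omega
        have e2 : min (cnt F (l ++ [x])) n₂ = min (cnt F l) n₂ + F x := by
          rw [cnt_concat]; have := h.2; omega
        rw [e1, e2, pow_add, pow_add]
        simp only [stoppedFactor, h, if_true]
        calc _ ≤ (G ^ min (cnt R l) n₁ * D ^ min (cnt F l) n₂) * (G ^ R x * D ^ F x) := by
              gcongr
          _ = _ := by ring
      · simp only [stoppedFactor, h, if_false, mul_one]
        refine ih.trans ?_
        gcongr <;> simp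
  refine key.trans ?_
  gcongr <;> simp

variable [Fintype X] {V : Type} [Fintype V] [Nonempty V]

/-- Comparison of the null law `K` with the mixture over `v` of the laws `K * ℓ v`. The
hypothesis `hχ` says that the one-episode cross moment of two likelihood ratios is absorbed by a
factor `G` when the flag `R` is raised and `D` when `F` is raised; then the stopped mixture has
χ²-divergence at most `1 / 16` by `hχ2`. Hence under the mixture the number of episodes with `F = 0`
is at least its value under the null, up to `T / 4` and to `T` times the probability, bounded by
Markov, that a budget is exhausted. -/
theorem core_one {K : List X → X → ℝ} (hK : ∀ p x, 0 ≤ K p x) (hK1 : ∀ p, ∑ x, K p x = 1)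
    {ℓ : V → X → ℝ} (hℓ : ∀ v x, 0 ≤ ℓ v x) (hℓ1 : ∀ v p, ∑ x, K p x * ℓ v x = 1)
    {R F : X → ℕ} (hR : ∀ x, R x ≤ 1) (hF : ∀ x, F x ≤ 1) {n₁ n₂ : ℕ} (hn₁ : 0 < n₁)
    (hn₂ : 0 < n₂) {G : V → V → ℝ} {D : ℝ} (hG : ∀ v v', 1 ≤ G v v') (hD : 1 ≤ D)
    (hχ : ∀ v v' p, ∑ x, K p x * (ℓ v x * ℓ v' x * ((G v v')⁻¹ ^ R x * D⁻¹ ^ F x)) ≤ 1)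
    (hχ2 : ∑ v, ∑ v', G v v' ^ n₁ * D ^ n₂ ≤ (1 + 1 / 16) * (Fintype.card V : ℝ) ^ 2) (T : ℕ) :
    (T : ℝ) - seqE K T (fun l => (cnt F l : ℝ)) -
        T * (seqE K T (fun l => (cnt R l : ℝ)) / n₁ + seqE K T (fun l => (cnt F l : ℝ)) / n₂) -
        T / 4 ≤
      (∑ v, seqE (fun p x => K p x * ℓ v x) T (fun l => (T : ℝ) - cnt F l)) /
        Fintype.card V := by
  classical
  set c : ℝ := (Fintype.card V : ℝ) with hc
  have hcpos : 0 < c := by rw [hc]; exact_mod_cast Fintype.card_pos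
  let Y : V → List X → ℝ := fun v l => seqProd (stoppedFactor R F n₁ n₂ (ℓ v)) l
  have hY1 : ∀ v, seqE K T (Y v) = 1 := by
    intro v
    refine seqE_prod_eq_one (fun p => ?_) T
    unfold stoppedFactor
    split_ifs
    · exact hℓ1 v p
    · simpa using hK1 p
  have hY0 : ∀ v l, 0 ≤ Y v l := by
    intro v l
    refine seqProd_nonneg (fun p x => ?_) l
    unfold stoppedFactor
    split_ifs
    · exact hℓ v x
    · exact zero_le_one
  have hYY : ∀ v v', seqE K T (fun l => Y v l * Y v' l) ≤ G v v' ^ n₁ * D ^ n₂ := by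
    intro v v'
    have hG0 : 0 < G v v' := lt_of_lt_of_le one_pos (hG v v')
    have hD0 : 0 < D := lt_of_lt_of_le one_pos hD
    let W : List X → X → ℝ := stoppedFactor R F n₁ n₂
      (fun x => ℓ v x * ℓ v' x * ((G v v')⁻¹ ^ R x * D⁻¹ ^ F x))
    have hW0 : ∀ p x, 0 ≤ W p x := by
      intro p x
      simp only [W, stoppedFactor]
      split_ifs
      · exact mul_nonneg (mul_nonneg (hℓ _ _) (hℓ _ _)) (by positivity)
      · exact zero_le_one
    have hW : seqE K T (seqProd W) ≤ 1 := by
      refine seqE_prod_le_one hK hW0 (fun p => ?_) T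
      simp only [W, stoppedFactor]
      split_ifs
      · exact hχ v v' p
      · simpa using (hK1 p).le
    have hsplit : ∀ l, Y v l * Y v' l = seqProd W l *
        seqProd (stoppedFactor R F n₁ n₂ fun x => G v v' ^ R x * D ^ F x) l := by
      intro l
      simp only [Y, W, ← seqProd_mul]
      congr 1
      funext p x
      simp only [stoppedFactor]
      split_ifs
      · rw [inv_pow, inv_pow]; field_simp
      · ring
    calc seqE K T (fun l => Y v l * Y v' l)
        ≤ seqE K T (fun l => (G v v' ^ n₁ * D ^ n₂) * seqProd W l) := by
          refine seqE_mono hK fun l _ => ?_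
          rw [hsplit, mul_comm]
          exact mul_le_mul_of_nonneg_right
            (seqProd_stopped_pow_le hR hF n₁ n₂ (hG v v') hD l) (seqProd_nonneg hW0 l)
      _ = (G v v' ^ n₁ * D ^ n₂) * seqE K T (seqProd W) := seqE_const_mul _ _ _ _
      _ ≤ (G v v' ^ n₁ * D ^ n₂) * 1 := mul_le_mul_of_nonneg_left hW (by positivity)
      _ = _ := mul_one _
  let L : List X → ℝ := fun l => (∑ v, Y v l) / c
  have hL1 : seqE K T L = 1 := by
    have : L = fun l => c⁻¹ * ∑ v, Y v l := by funext l; simp [L]; ring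
    rw [this, seqE_const_mul, seqE_sum]
    simp only [hY1]
    simp [← hc, hcpos.ne']
  have hL2 : seqE K T (fun l => L l ^ 2) ≤ 1 + 1 / 16 := by
    have : (fun l => L l ^ 2) = fun l => (c ^ 2)⁻¹ * ∑ v, ∑ v', Y v l * Y v' l := by
      funext l
      simp only [L]
      rw [div_pow, sq (∑ v, Y v l), Finset.sum_mul_sum]; ring
    rw [this, seqE_const_mul, seqE_sum]
    simp only [seqE_sum]
    rw [inv_mul_le_iff₀ (by positivity)]
    calc _ ≤ ∑ v, ∑ v', G v v' ^ n₁ * D ^ n₂ :=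
          Finset.sum_le_sum fun v _ => Finset.sum_le_sum fun v' _ => hYY v v'
      _ ≤ _ := hχ2
      _ = _ := by ring
  have hL3 : seqE K T (fun l => (1 - L l) ^ 2) ≤ 1 / 16 := by
    have : (fun l => (1 - L l) ^ 2) = fun l => (1 - 2 * L l) + L l ^ 2 := by funext l; ring
    rw [this, seqE_add, seqE_sub, seqE_const_mul, hL1, seqE_one hK1]
    linarith
  -- reduce the right-hand side to the null law
  have hR1 : seqE K T (fun l => if IsActive R F n₁ n₂ l then L l * ((T : ℝ) - cnt F l) else 0) ≤
      (∑ v, seqE (fun p x => K p x * ℓ v x) T (fun l => (T : ℝ) - cnt F l)) / c := by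
    have e : (∑ v, seqE (fun p x => K p x * ℓ v x) T (fun l => (T : ℝ) - cnt F l)) / c =
        seqE K T (fun l => c⁻¹ * ∑ v, seqProd (fun _ x => ℓ v x) l * ((T : ℝ) - cnt F l)) := by
      rw [seqE_const_mul, seqE_sum, div_eq_inv_mul]
      simp only [← seqE_mul]
    rw [e]
    refine seqE_mono hK fun l hl => ?_
    have hT : (0 : ℝ) ≤ (T : ℝ) - cnt F l := by
      have := cnt_le_length hF l
      rw [hl] at this
      have : (cnt F l : ℝ) ≤ T := by exact_mod_cast this
      linarith
    split_ifs with h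
    · simp only [L, Y]
      simp only [seqProd_stopped_of_active _ l h]
      rw [← Finset.sum_mul]
      exact le_of_eq (by ring)
    · refine mul_nonneg (by positivity) (Finset.sum_nonneg fun v _ => mul_nonneg ?_ hT)
      exact seqProd_nonneg (fun _ x => hℓ v x) l
  refine le_trans ?_ hR1
  have hR2 : ∀ l, l.length = T →
      ((T : ℝ) - cnt F l) - (T / n₁ * cnt R l + T / n₂ * cnt F l) -
        (T / 8 + 2 * T * (1 - L l) ^ 2) ≤
      if IsActive R F n₁ n₂ l then L l * ((T : ℝ) - cnt F l) else 0 := by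
    intro l hl
    have h0 : (0 : ℝ) ≤ cnt F l := Nat.cast_nonneg _
    have h0' : (0 : ℝ) ≤ cnt R l := Nat.cast_nonneg _
    have hT : (cnt F l : ℝ) ≤ T := by
      have := cnt_le_length hF l
      rw [hl] at this
      exact_mod_cast this
    have hT0 : (0 : ℝ) ≤ T := Nat.cast_nonneg _
    have hn₁' : (0 : ℝ) < n₁ := by exact_mod_cast hn₁
    have hn₂' : (0 : ℝ) < n₂ := by exact_mod_cast hn₂
    have ha : (0 : ℝ) ≤ T / n₁ * cnt R l := by positivity
    have hb : (0 : ℝ) ≤ T / n₂ * cnt F l := by positivity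
    split_ifs with h
    · have h3 : (1 - L l) ≤ 1 / 8 + 2 * (1 - L l) ^ 2 := by
        nlinarith [sq_nonneg (1 - L l - 1 / 4)]
      have h4 : (1 - L l) * (T - cnt F l) ≤ (1 / 8 + 2 * (1 - L l) ^ 2) * T := by
        calc _ ≤ (1 / 8 + 2 * (1 - L l) ^ 2) * (T - cnt F l) :=
              mul_le_mul_of_nonneg_right h3 (by linarith)
          _ ≤ _ := mul_le_mul_of_nonneg_left (by linarith) (by positivity)
      nlinarith
    · have h5 : (T : ℝ) ≤ T / n₁ * cnt R l + T / n₂ * cnt F l := by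
        simp only [IsActive, not_and_or, not_lt] at h
        rcases h with h | h
        · have : (n₁ : ℝ) ≤ cnt R l := by exact_mod_cast h
          have : (T : ℝ) / n₁ * n₁ ≤ T / n₁ * cnt R l :=
            mul_le_mul_of_nonneg_left this (by positivity)
          rw [div_mul_cancel₀ _ hn₁'.ne'] at this
          linarith
        · have : (n₂ : ℝ) ≤ cnt F l := by exact_mod_cast h
          have : (T : ℝ) / n₂ * n₂ ≤ T / n₂ * cnt F l :=
            mul_le_mul_of_nonneg_left this (by positivity)
          rw [div_mul_cancel₀ _ hn₂'.ne'] at this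
          linarith
      have : (0 : ℝ) ≤ T / 8 + 2 * T * (1 - L l) ^ 2 := by positivity
      linarith
  refine le_trans ?_ (seqE_mono hK hR2)
  simp only [seqE_sub, seqE_add, seqE_const_mul, seqE_const hK1]
  have : 2 * (T : ℝ) * seqE K T (fun l => (1 - L l) ^ 2) ≤ 2 * T * (1 / 16) :=
    mul_le_mul_of_nonneg_left hL3 (by positivity)
  have e3 : (T : ℝ) * (seqE K T (fun l => (cnt R l : ℝ)) / n₁ +
      seqE K T (fun l => (cnt F l : ℝ)) / n₂) =
    T / n₁ * seqE K T (fun l => (cnt R l : ℝ)) + T / n₂ * seqE K T (fun l => (cnt F l : ℝ)) := by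
    ring
  linarith

/-- Average of `core_one` over `θ`. Every episode raises `F θ` for at most one `θ`, and raises
`R θ` for a fraction at most `1 / Nn` of them, and only if it pays `rev = 1`. So either the null
instance sees about `Nn * n₁` reveals, each costing `1 / 2`, or some alternative misses the
bonus `ε` in a constant fraction of the episodes. -/
theorem core_two {Θ : Type} [Fintype Θ] [Nonempty Θ] {K : List X → X → ℝ}
    (hK : ∀ p x, 0 ≤ K p x) (hK1 : ∀ p, ∑ x, K p x = 1)
    {ℓ : Θ → V → X → ℝ} (hℓ : ∀ θ v x, 0 ≤ ℓ θ v x)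
    (hℓ1 : ∀ θ v p, ∑ x, K p x * ℓ θ v x = 1)
    {R F : Θ → X → ℕ} (hR : ∀ θ x, R θ x ≤ 1) (hF : ∀ θ x, F θ x ≤ 1) {n₁ n₂ : ℕ} (hn₁ : 0 < n₁)
    (hn₂ : 0 < n₂) {G : V → V → ℝ} {D : ℝ} (hG : ∀ v v', 1 ≤ G v v') (hD : 1 ≤ D)
    (hχ : ∀ θ v v' p,
      ∑ x, K p x * (ℓ θ v x * ℓ θ v' x * ((G v v')⁻¹ ^ R θ x * D⁻¹ ^ F θ x)) ≤ 1)
    (hχ2 : ∑ v, ∑ v', G v v' ^ n₁ * D ^ n₂ ≤ (1 + 1 / 16) * (Fintype.card V : ℝ) ^ 2) (T : ℕ)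
    {rev : X → ℕ} {Nn : ℝ} (hNn : 0 < Nn)
    (hsR : ∀ x, ∑ θ, (R θ x : ℝ) ≤ (Fintype.card Θ : ℝ) / Nn * rev x)
    (hsF : ∀ x, ∑ θ, F θ x ≤ 1)
    (hΘ : 8 ≤ Fintype.card Θ) (hΘ2 : 8 * (T : ℝ) ≤ Fintype.card Θ * n₂)
    {B ε : ℝ} (hε : 0 ≤ ε) (hB1 : B ≤ Nn * n₁ / 16) (hB2 : B ≤ 3 / 8 * ε * T)
    {reg0 : ℝ} {reg : Θ → V → ℝ}
    (hreg0 : 1 / 2 * seqE K T (fun l => (cnt rev l : ℝ)) ≤ reg0)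
    (hreg : ∀ θ v, ε * seqE (fun p x => K p x * ℓ θ v x) T (fun l => (T : ℝ) - cnt (F θ) l) ≤
      reg θ v) :
    B ≤ reg0 ∨ ∃ θ v, B ≤ reg θ v := by
  classical
  by_contra hcon
  push Not at hcon
  obtain ⟨hc1, hc2⟩ := hcon
  set ρ := seqE K T (fun l => (cnt rev l : ℝ)) with hρ
  set t : ℝ := (Fintype.card Θ : ℝ) with ht
  set c : ℝ := (Fintype.card V : ℝ) with hc
  have hcpos : 0 < c := by rw [hc]; exact_mod_cast Fintype.card_pos
  have ht8 : 8 ≤ t := by rw [ht]; exact_mod_cast hΘ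
  have hn₁' : (0 : ℝ) < n₁ := by exact_mod_cast hn₁
  have hn₂' : (0 : ℝ) < n₂ := by exact_mod_cast hn₂
  have hT0 : (0 : ℝ) ≤ T := Nat.cast_nonneg _
  have hρ1 : ρ ≤ Nn * n₁ / 8 := by linarith
  have h1 : ∀ θ, _ := fun θ => core_one hK hK1 (hℓ θ) (hℓ1 θ) (hR θ) (hF θ) hn₁ hn₂ hG hD (hχ θ)
    hχ2 T
  have h2 := Finset.sum_le_sum fun θ (_ : θ ∈ (Finset.univ : Finset Θ)) => h1 θ
  have hup : ∑ θ, (∑ v, seqE (fun p x => K p x * ℓ θ v x) T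
      (fun l => (T : ℝ) - cnt (F θ) l)) / c * ε < t * B := by
    have : ∀ θ, (∑ v, seqE (fun p x => K p x * ℓ θ v x) T
      (fun l => (T : ℝ) - cnt (F θ) l)) / c * ε < B := by
      intro θ
      rw [div_mul_eq_mul_div, div_lt_iff₀ hcpos, Finset.sum_mul]
      calc _ < ∑ v : V, B := Finset.sum_lt_sum_of_nonempty Finset.univ_nonempty fun v _ => by
            have h3 := hreg θ v
            have h4 := hc2 θ v
            rw [mul_comm]
            linarith
        _ = B * c := by simp [hc, mul_comm]
    calc _ < ∑ θ : Θ, B :=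
          Finset.sum_lt_sum_of_nonempty Finset.univ_nonempty fun θ _ => this θ
      _ = t * B := by simp [ht]
  have hsumF : ∑ θ, seqE K T (fun l => (cnt (F θ) l : ℝ)) ≤ T := by
    rw [← seqE_sum]
    calc _ ≤ seqE K T (fun _ => (T : ℝ)) := by
          refine seqE_mono hK fun l hl => ?_
          have : ∑ θ, cnt (F θ) l ≤ l.length := by
            clear hl
            induction l using List.reverseRecOn with
            | nil => simp [cnt]
            | append_singleton l x ih =>
              have := hsF x
              simp only [cnt_concat, Finset.sum_add_distrib, List.length_append,
                List.length_singleton]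
              omega
          rw [hl] at this
          exact_mod_cast this
      _ = T := seqE_const hK1 _ _
  have hsumR : ∑ θ, seqE K T (fun l => (cnt (R θ) l : ℝ)) ≤ t / Nn * ρ := by
    rw [← seqE_sum, hρ, ← seqE_const_mul]
    refine seqE_mono hK fun l hl => ?_
    clear hl
    induction l using List.reverseRecOn with
    | nil => simp [cnt]
    | append_singleton l x ih =>
      have := hsR x
      simp only [cnt_concat, Finset.sum_add_distrib, Nat.cast_add, mul_add]
      linarith
  have h3 : 3 / 8 * t * T ≤ ∑ θ, (∑ v, seqE (fun p x => K p x * ℓ θ v x) T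
      (fun l => (T : ℝ) - cnt (F θ) l)) / c := by
    refine le_trans ?_ h2
    simp only [Finset.sum_sub_distrib, ← Finset.mul_sum, Finset.sum_add_distrib,
      ← Finset.sum_div, Finset.sum_const, Finset.card_univ, nsmul_eq_mul, ← ht]
    have a1 : (∑ θ, seqE K T (fun l => (cnt (F θ) l : ℝ))) / n₂ ≤ t / 8 := by
      rw [div_le_iff₀ hn₂']
      linarith
    have a2 : (∑ θ, seqE K T (fun l => (cnt (R θ) l : ℝ))) / n₁ ≤ t / 8 := by
      rw [div_le_iff₀ hn₁']
      calc _ ≤ t / Nn * ρ := hsumR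
        _ ≤ t / Nn * (Nn * n₁ / 8) := mul_le_mul_of_nonneg_left hρ1 (by positivity)
        _ = t / 8 * n₁ := by field_simp
    have a3 := mul_le_mul_of_nonneg_left (add_le_add a2 a1) hT0
    have a4 : (T : ℝ) ≤ t * T / 8 := by nlinarith
    have a6 : (T : ℝ) * (t / 8 + t / 8) = t * T / 4 := by ring
    linarith
  rw [← Finset.sum_mul] at hup
  have h4 := mul_le_mul_of_nonneg_right h3 hε
  have h5 : t * B ≤ t * (3 / 8 * ε * T) := mul_le_mul_of_nonneg_left hB2 (by linarith)
  have : 3 / 8 * t * T * ε = t * (3 / 8 * ε * T) := by ring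
  linarith

end Core

/-! ### Latent states and observations of the hard instances -/

section Instance

/-- Latent states: `X` register states, the two coin states (`Bool`), the two signal states
(`Bool`), and the dead state. -/
abbrev St (X : ℕ) : Type := Fin X ⊕ (Bool ⊕ (Bool ⊕ Unit))
/-- Observations: the `X` registers, the `2 n` signals `(i, d)`, and three special symbols
`blankO`, `deadO`, `goodO`. -/
abbrev Ob (X n : ℕ) : Type := Fin X ⊕ ((Fin n × Bool) ⊕ Fin 3)

/-- The sign `±1` of a Boolean. -/
def sg (b : Bool) : ℝ := if b then 1 else -1

@[simp] lemma sg_true : sg true = 1 := rfl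
@[simp] lemma sg_false : sg false = -1 := rfl

lemma abs_sg (b : Bool) : |sg b| = 1 := by cases b <;> simp

/-- The point mass at `a`, evaluated at `b`. -/
def pt {α : Type} [DecidableEq α] (a b : α) : ℝ := if b = a then 1 else 0

lemma pt_nonneg {α : Type} [DecidableEq α] (a b : α) : 0 ≤ pt a b := by
  unfold pt; split_ifs <;> norm_num

@[simp] lemma sum_pt {α : Type} [DecidableEq α] [Fintype α] (a : α) : ∑ b, pt a b = 1 := by
  simp [pt]

lemma sum_pt_mul {α : Type} [DecidableEq α] [Fintype α] (a : α) (f : α → ℝ) :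
    ∑ b, pt a b * f b = f a := by
  simp [pt]

variable {X n : ℕ}

/-- The distribution on the two coin states with bias `δ` towards `true`. -/
def pmD (δ : ℝ) : St X → ℝ
  | .inr (.inl b) => 1 / 2 + sg b * δ
  | _ => 0

/-- The distribution on the two signal states with bias `δ` towards `true`. -/
def sigD (δ : ℝ) : St X → ℝ
  | .inr (.inr (.inl b)) => 1 / 2 + sg b * δ
  | _ => 0

/-- The absorbing state that follows a signal state. -/
def deadS : St X := .inr (.inr (.inr ()))

/-- The law of a signal: `i` is uniform and the sign `d` has correlation `δ` with `v i`. -/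
def sigO (v : Fin n → Bool) (δ : ℝ) : Ob X n → ℝ
  | .inr (.inl (i, d)) => (1 + δ * (sg d * sg (v i))) / (2 * n)
  | _ => 0

/-- What a coin state shows before the last step, and what the coin `false` shows at the last step. -/
def blankO : Ob X n := .inr (.inr 0)
/-- The observation of the dead state. -/
def deadO : Ob X n := .inr (.inr 1)
/-- What the coin `true` shows at the last step; the only observation with a reward. -/
def goodO : Ob X n := .inr (.inr 2)

/-- The law of the last observation of a coin of bias `δ`. -/
def finO (δ : ℝ) (o : Ob X n) : ℝ := (1 / 2 + δ) * pt goodO o + (1 / 2 - δ) * pt blankO o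

lemma sg_mul_bound {b : Bool} {δ : ℝ} (hδ : |δ| ≤ 1 / 2) : 0 ≤ 1 / 2 + sg b * δ := by
  obtain ⟨h1, h2⟩ := abs_le.1 hδ
  cases b <;> simp <;> linarith

lemma pmD_nonneg {δ : ℝ} (hδ : |δ| ≤ 1 / 2) (s : St X) : 0 ≤ pmD δ s := by
  rcases s with x | b | b | u <;> simp only [pmD, le_refl]
  exact sg_mul_bound hδ

lemma sigD_nonneg {δ : ℝ} (hδ : |δ| ≤ 1 / 2) (s : St X) : 0 ≤ sigD δ s := by
  rcases s with x | b | b | u <;> simp only [sigD, le_refl]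
  exact sg_mul_bound hδ

@[simp] lemma sum_pmD (δ : ℝ) : ∑ s : St X, pmD δ s = 1 := by
  simp [Fintype.sum_sum_type, pmD]; ring

@[simp] lemma sum_sigD (δ : ℝ) : ∑ s : St X, sigD δ s = 1 := by
  simp [Fintype.sum_sum_type, sigD]; ring

lemma sum_pmD_mul (δ : ℝ) (f : St X → ℝ) : ∑ s : St X, pmD δ s * f s =
    (1 / 2 + δ) * f (.inr (.inl true)) + (1 / 2 - δ) * f (.inr (.inl false)) := by
  simp [Fintype.sum_sum_type, pmD, sub_eq_add_neg]

lemma sum_sigD_mul (δ : ℝ) (f : St X → ℝ) : ∑ s : St X, sigD δ s * f s =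
    (1 / 2 + δ) * f (.inr (.inr (.inl true))) + (1 / 2 - δ) * f (.inr (.inr (.inl false))) := by
  simp [Fintype.sum_sum_type, sigD, sub_eq_add_neg]

lemma abs_sg_mul_le (d b : Bool) : |sg d * sg b| ≤ 1 := by
  rw [abs_mul, abs_sg, abs_sg]; norm_num

lemma sigO_nonneg (v : Fin n → Bool) {δ : ℝ} (hδ : |δ| ≤ 1) (o : Ob X n) : 0 ≤ sigO v δ o := by
  rcases o with x | ⟨i, d⟩ | t <;> simp only [sigO, le_refl]
  refine div_nonneg ?_ (by positivity)
  have : |δ * (sg d * sg (v i))| ≤ 1 := by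
    rw [abs_mul]; exact mul_le_one₀ hδ (abs_nonneg _) (abs_sg_mul_le _ _)
  linarith [(abs_le.1 this).1]

lemma sum_sigO_mul (v : Fin n → Bool) (δ : ℝ) (f : Ob X n → ℝ) :
    ∑ o : Ob X n, sigO v δ o * f o =
      ∑ i : Fin n, ∑ d : Bool,
        (1 + δ * (sg d * sg (v i))) / (2 * n) * f (.inr (.inl (i, d))) := by
  rw [Fintype.sum_sum_type, Fintype.sum_sum_type, Fintype.sum_prod_type]
  simp [sigO]

lemma sum_sigO (hn : 0 < n) (v : Fin n → Bool) (δ : ℝ) : ∑ o : Ob X n, sigO v δ o = 1 := by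
  have h := sum_sigO_mul (X := X) v δ (fun _ => 1)
  simp only [mul_one] at h
  rw [h]
  have hn' : (n : ℝ) ≠ 0 := by exact_mod_cast hn.ne'
  have : ∀ i : Fin n, ∑ d : Bool, (1 + δ * (sg d * sg (v i))) / (2 * n) = (1 : ℝ) / n := by
    intro i; simp; field_simp; ring
  rw [Finset.sum_congr rfl fun i _ => this i]
  simp [hn']

lemma sum_finO_mul (δ : ℝ) (f : Ob X n → ℝ) :
    ∑ o : Ob X n, finO δ o * f o = (1 / 2 + δ) * f goodO + (1 / 2 - δ) * f blankO := by
  simp only [finO, add_mul, Finset.sum_add_distrib, mul_assoc, ← Finset.mul_sum, sum_pt_mul]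

lemma sum_finO (δ : ℝ) : ∑ o : Ob X n, finO δ o = 1 := by
  have h := sum_finO_mul (X := X) (n := n) δ (fun _ => 1)
  simp only [mul_one] at h
  rw [h]; ring

end Instance

/-! ### The hard instances and their filter -/

section Model
variable (k nh L r n A : ℕ)

/-- A way of leaving the register part: the step, the register and the action. -/
abbrev Lo : Type := ℕ × Fin (2 ^ k) × Fin A
/-- The hidden parameter: a location (one of `nh` steps, a register, an action other than the two
shift actions `0`, `1`) and a password of `L` actions, all of them at least `r`. -/
abbrev Theta : Type :=
  ((Fin nh × Fin (2 ^ k)) × Fin (A - 2)) × (Fin L → {a : Fin A // r ≤ a.1})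

variable {k nh L r n A}

/-- The hidden location as a step, register and action. The first `k` steps are left for
reaching an arbitrary register. -/
def Theta.loc (θ : Theta k nh L r A) : Lo k A :=
  (k + 1 + θ.1.1.1.1, θ.1.1.2, ⟨θ.1.2.1 + 2, by have := θ.1.2.2; omega⟩)

/-- Playing `a` at step `h` does not contradict the password, which occupies the `L` steps
`k + nh + 1, …, k + nh + L` just before the last one. -/
def Theta.okAct (θ : Theta k nh L r A) (h : ℕ) (a : Fin A) : Prop :=
  ∀ i : Fin L, h = k + nh + 1 + i.1 → a = (θ.2 i).1

/-- Shift a bit into the register; only used for `a = 0` and `a = 1`. -/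
def shift (x : Fin (2 ^ k)) (a : Fin A) : Fin (2 ^ k) :=
  ⟨(2 * x.1 + a.1) % 2 ^ k, Nat.mod_lt _ (by positivity)⟩

open Classical in
/-- Transitions. Actions `0`, `1` shift the register, any other action starts the coin, with bias
`ε` at the hidden location and fair elsewhere. In a coin state an action below `r` reveals (it moves to
the signal state of the same sign), a correct password action keeps the coin, and a wrong one
rerandomizes it. A signal state leads to the dead state. -/
def trK (θ : Theta k nh L r A) (ε : ℝ) (h : ℕ) : St (2 ^ k) → Fin A → St (2 ^ k) → ℝ
  | .inl x, a => if a.1 < 2 then pt (.inl (shift x a))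
      else pmD (if (h, x, a) = θ.loc then ε else 0)
  | .inr (.inl b), a => if a.1 < r then sigD (sg b / 2)
      else pmD (if θ.okAct h a then sg b / 2 else 0)
  | .inr (.inr _), _ => pt deadS

/-- Emissions. Registers are visible, a coin is invisible before the last step `H`, and a signal
state of sign `b` emits a signal with correlation `±σ` to the secret `v`. -/
def emK (H : ℕ) (v : Fin n → Bool) (σ : ℝ) (h : ℕ) : St (2 ^ k) → Ob (2 ^ k) n → ℝ
  | .inl x => pt (.inl x)
  | .inr (.inl b) => if h = H then finO (sg b / 2) else pt blankO
  | .inr (.inr (.inl b)) => sigO v (sg b * σ)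
  | .inr (.inr (.inr _)) => pt deadO

lemma abs_sg_half (b : Bool) : |sg b / 2| ≤ 1 / 2 := by
  rw [abs_div, abs_sg]; norm_num

lemma finO_nonneg {X : ℕ} {δ : ℝ} (hδ : |δ| ≤ 1 / 2) (o : Ob X n) : 0 ≤ finO δ o := by
  obtain ⟨h1, h2⟩ := abs_le.1 hδ
  exact add_nonneg (mul_nonneg (by linarith) (pt_nonneg _ _))
    (mul_nonneg (by linarith) (pt_nonneg _ _))

lemma trK_nonneg (θ : Theta k nh L r A) {ε : ℝ} (hε : |ε| ≤ 1 / 2) (h : ℕ)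
    (s : St (2 ^ k)) (a : Fin A) (s' : St (2 ^ k)) : 0 ≤ trK θ ε h s a s' := by
  rcases s with x | b | s <;> simp only [trK]
  · split_ifs
    · exact pt_nonneg _ _
    · exact pmD_nonneg hε _
    · exact pmD_nonneg (by norm_num) _
  · split_ifs
    · exact sigD_nonneg (abs_sg_half b) _
    · exact pmD_nonneg (abs_sg_half b) _
    · exact pmD_nonneg (by norm_num) _
  · exact pt_nonneg _ _

lemma trK_sum (θ : Theta k nh L r A) (ε : ℝ) (h : ℕ)
    (s : St (2 ^ k)) (a : Fin A) : ∑ s', trK θ ε h s a s' = 1 := by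
  rcases s with x | b | s <;> simp only [trK]
  · split_ifs <;> simp only [sum_pt, sum_pmD]
  · split_ifs <;> simp only [sum_sigD, sum_pmD]
  · exact sum_pt _

lemma emK_nonneg (H : ℕ) (v : Fin n → Bool) {σ : ℝ} (hσ : |σ| ≤ 1) (h : ℕ)
    (s : St (2 ^ k)) (o : Ob (2 ^ k) n) : 0 ≤ emK H v σ h s o := by
  rcases s with x | b | b | u <;> simp only [emK]
  · exact pt_nonneg _ _
  · split_ifs
    · exact finO_nonneg (abs_sg_half b) _
    · exact pt_nonneg _ _
  · exact sigO_nonneg v (by rw [abs_mul, abs_sg, one_mul]; exact hσ) _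
  · exact pt_nonneg _ _

lemma emK_sum (H : ℕ) (hn : 0 < n) (v : Fin n → Bool) (σ : ℝ) (h : ℕ)
    (s : St (2 ^ k)) : ∑ o : Ob (2 ^ k) n, emK H v σ h s o = 1 := by
  rcases s with x | b | b | u <;> simp only [emK]
  · exact sum_pt _
  · split_ifs
    · exact sum_finO _
    · exact sum_pt _
  · exact sum_sigO hn _ _
  · exact sum_pt _

/-- The initial register. -/
def x₀ : Fin (2 ^ k) := ⟨0, by positivity⟩

variable {S' O' : Type} [Fintype S'] [Fintype O']

open Classical in
/-- The hard instance with hidden parameter `θ`, secret signs `v`, bias `ε` and signal strength `σ`.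
The state and observation spaces are carried along bijections so that the instance can live on `Fin`.
For `ε = 0` it is the null instance. -/
def hardM (e : S' ≃ St (2 ^ k)) (eo : O' ≃ Ob (2 ^ k) n) (hn : 0 < n) {σ : ℝ} (hσ : |σ| ≤ 1)
    (θ : Theta k nh L r A) (v : Fin n → Bool) {ε : ℝ} (hε : |ε| ≤ 1 / 2) :
    POMDP S' O' (Fin A) (k + nh + L + 1) where
  init s := pt (.inl x₀) (e s)
  init_nonneg s := pt_nonneg _ _
  init_sum := by rw [e.sum_comp (fun s => pt (Sum.inl x₀) s)]; exact sum_pt _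
  trans h s a s' := trK θ ε h (e s) a (e s')
  trans_nonneg h s a s' := trK_nonneg θ hε _ _ _ _
  trans_sum h s a := by rw [e.sum_comp (fun s' => trK θ ε h (e s) a s')]; exact trK_sum _ _ _ _ _
  emit h s o := emK (k + nh + L + 1) v σ h (e s) (eo o)
  emit_nonneg h s o := emK_nonneg _ v hσ _ _ _
  emit_sum h s := by
    rw [eo.sum_comp (fun o => emK (k + nh + L + 1) v σ h (e s) o)]; exact emK_sum _ hn _ _ _ _
  reward h o _ := if h = k + nh + L + 1 then pt goodO (eo o) else 0
  reward_nonneg h o _ := by split_ifs; exacts [pt_nonneg _ _, le_rfl]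
  reward_le_one h o _ := by unfold pt; split_ifs <;> norm_num
  reward_total τ := by
    rw [Fin.sum_univ_castSucc, Finset.sum_eq_zero (fun i _ => if_neg (by simp; omega))]
    simp only [Fin.val_last, if_true, pt]
    split_ifs <;> norm_num

/-- The state of the filter: a visible register, or the coin, signal or dead phase together
with the location through which the register part was left and a flag saying whether that location,
and all later password actions, were the right ones. -/
inductive Mode (k A : ℕ) : Type
  | reg (x : Fin (2 ^ k))
  | mix (loc : Lo k A) (b : Bool)
  | sig (loc : Lo k A) (b : Bool)
  | dead (loc : Lo k A) (b : Bool)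

open Classical in
/-- Update of the mode by an action. -/
def stp (θ : Theta k nh L r A) (h : ℕ) : Mode k A → Fin A → Mode k A
  | .reg x, a => if a.1 < 2 then .reg (shift x a) else .mix (h, x, a) (decide ((h, x, a) = θ.loc))
  | .mix loc b, a => if a.1 < r then .sig loc b else .mix loc (b && decide (θ.okAct h a))
  | .sig loc b, _ => .dead loc b
  | .dead loc b, _ => .dead loc b

/-- The bias of the coin under a given flag. -/
def wt (ε : ℝ) (b : Bool) : ℝ := if b then ε else 0

/-- The posterior of the latent state in a given mode. -/
def bel (ε : ℝ) : Mode k A → St (2 ^ k) → ℝ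
  | .reg x => pt (.inl x)
  | .mix _ b => pmD (wt ε b)
  | .sig _ b => sigD (wt ε b)
  | .dead _ _ => pt deadS

/-- The law of the observation at step `h` in a given mode. -/
def obq (H : ℕ) (v : Fin n → Bool) (σ ε : ℝ) (h : ℕ) : Mode k A → Ob (2 ^ k) n → ℝ
  | .reg x => pt (.inl x)
  | .mix _ b => if h = H then finO (wt ε b) else pt blankO
  | .sig _ b => sigO v (2 * wt ε b * σ)
  | .dead _ _ => pt deadO

lemma pmD_mix (δ : ℝ) (s : St (2 ^ k)) :
    (1 / 2 + δ) * pmD (1 / 2) s + (1 / 2 - δ) * pmD (-1 / 2) s = pmD δ s := by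
  rcases s with x | b | b | u <;> simp only [pmD] <;> ring

lemma sigD_mix (δ : ℝ) (s : St (2 ^ k)) :
    (1 / 2 + δ) * sigD (1 / 2) s + (1 / 2 - δ) * sigD (-1 / 2) s = sigD δ s := by
  rcases s with x | b | b | u <;> simp only [sigD] <;> ring

lemma finO_mix (δ : ℝ) (o : Ob (2 ^ k) n) :
    (1 / 2 + δ) * finO (1 / 2) o + (1 / 2 - δ) * finO (-1 / 2) o = finO δ o := by
  simp only [finO]; ring

lemma sigO_mix (v : Fin n → Bool) (δ σ : ℝ) (o : Ob (2 ^ k) n) :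
    (1 / 2 + δ) * sigO v σ o + (1 / 2 - δ) * sigO v (-σ) o = sigO v (2 * δ * σ) o := by
  rcases o with x | ⟨i, d⟩ | t <;> simp only [sigO] <;> ring

@[simp] lemma bel_reg (ε : ℝ) (x : Fin (2 ^ k)) :
    bel (A := A) ε (.reg x) = pt (.inl x) := rfl
@[simp] lemma bel_mix (ε : ℝ) (l : Lo k A) (b : Bool) :
    bel ε (.mix l b) = pmD (wt ε b) := rfl
@[simp] lemma bel_sig (ε : ℝ) (l : Lo k A) (b : Bool) :
    bel ε (.sig l b) = sigD (wt ε b) := rfl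
@[simp] lemma bel_dead (ε : ℝ) (l : Lo k A) (b : Bool) : bel ε (.dead l b) = pt deadS := rfl

open Classical in
/-- The modes filter the hard instances. In the null instance this holds for the modes of
every `θ`, whatever the parameter `θ'` of the instance: the flags then carry no information. -/
theorem hardM_filters (e : S' ≃ St (2 ^ k)) (eo : O' ≃ Ob (2 ^ k) n) (hn : 0 < n) {σ : ℝ}
    (hσ : |σ| ≤ 1) (θ θ' : Theta k nh L r A) (v : Fin n → Bool) {ε : ℝ} (hε : |ε| ≤ 1 / 2)
    (hθ : θ' = θ ∨ ε = 0) :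
    Filters (hardM e eo hn hσ θ' v hε) (stp θ) (.reg x₀) (fun u s => bel ε u (e s))
      (fun h u o => obq (k + nh + L + 1) v σ ε h u (eo o)) where
  init s := rfl
  step h _ hh u o a s' := by
    have hne : ¬ h = k + nh + L + 1 := by omega
    change ∑ s, bel ε u (e s) * emK (k + nh + L + 1) v σ h (e s) (eo o) *
      trK θ' ε h (e s) a (e s') = _
    rw [e.sum_comp (fun s => bel ε u s * emK (k + nh + L + 1) v σ h s (eo o) *
      trK θ' ε h s a (e s'))]
    simp only [mul_assoc]
    cases u with
    | reg x =>
      simp only [bel_reg, sum_pt_mul, emK, obq, trK, stp]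
      congr 1
      by_cases h1 : a.1 < 2
      · simp only [h1, if_true, bel_reg]
      · simp only [h1, if_false, bel_mix]
        rcases hθ with rfl | rfl
        · by_cases h2 : (h, x, a) = θ'.loc <;> simp only [wt, h2] <;> simp
        · simp [wt]
    | mix loc b =>
      simp only [bel_mix, sum_pmD_mul, emK, obq, trK, stp, hne, if_false, sg_true, sg_false]
      split_ifs with h1 h2
      · simp only [bel_sig]
        linear_combination pt blankO (eo o) * sigD_mix (wt ε b) (e s')
      · simp only [bel_mix]
        have : wt ε (b && decide (θ.okAct h a)) = wt ε b := by
          rcases hθ with rfl | rfl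
          · simp [h2]
          · simp [wt]
        rw [this]
        linear_combination pt blankO (eo o) * pmD_mix (wt ε b) (e s')
      · simp only [bel_mix]
        have : wt ε (b && decide (θ.okAct h a)) = 0 := by
          rcases hθ with rfl | rfl
          · simp [h2, wt]
          · simp [wt]
        rw [this]; ring
    | sig loc b =>
      simp only [bel_reg, bel_mix, bel_sig, bel_dead, sum_sigD_mul, emK, obq, trK, stp, sg_true, sg_false, one_mul, neg_one_mul]
      rw [← sigO_mix]; ring
    | dead loc b => simp only [bel_reg, bel_mix, bel_sig, bel_dead, sum_pt_mul, deadS, emK, obq, trK, stp]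
  last u o := by
    change ∑ s, bel ε u (e s) * emK (k + nh + L + 1) v σ _ (e s) (eo o) = _
    rw [e.sum_comp (fun s => bel ε u s * emK (k + nh + L + 1) v σ (k + nh + L + 1) s (eo o))]
    cases u with
    | reg x => simp only [bel_reg, bel_mix, bel_sig, bel_dead, sum_pt_mul, emK, obq]
    | mix loc b =>
      simp only [bel_reg, bel_mix, bel_sig, bel_dead, sum_pmD_mul, emK, obq, if_true, sg_true, sg_false]
      exact finO_mix _ _
    | sig loc b =>
      simp only [bel_reg, bel_mix, bel_sig, bel_dead, sum_sigD_mul, emK, obq, sg_true, sg_false, one_mul, neg_one_mul]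
      exact sigO_mix _ _ _ _
    | dead loc b => simp only [bel_reg, bel_mix, bel_sig, bel_dead, sum_pt_mul, deadS, emK, obq]

end Model

/-! ### One-step likelihood ratios -/

section Likelihood
variable {k nh L r n A : ℕ}

open Classical in
/-- The likelihood ratio of one observation against the null instance. -/
def rho (H : ℕ) (v : Fin n → Bool) (σ ε : ℝ) (h : ℕ) : Mode k A → Ob (2 ^ k) n → ℝ
  | .mix _ b, o => if h = H then
      (if o = goodO then 1 + 2 * wt ε b else if o = blankO then 1 - 2 * wt ε b else 1) else 1
  | .sig _ b, .inr (.inl (i, d)) => 1 + 2 * wt ε b * σ * (sg d * sg (v i))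
  | _, _ => 1

/-- The factor compensating one step of a cross moment of likelihood ratios: `G⁻¹` at a signal
from the right location, `D⁻¹` at the last step of a correctly played coin. -/
def ccf (H : ℕ) (G D : ℝ) (h : ℕ) : Mode k A → ℝ
  | .mix _ b => if h = H then (if b then D⁻¹ else 1) else 1
  | .sig _ b => if b then G⁻¹ else 1
  | _ => 1

lemma good_ne_blank {X : ℕ} : (goodO : Ob X n) ≠ blankO := by
  simp [goodO, blankO]

lemma abs_wt {ε c : ℝ} (hε : |ε| ≤ c) (b : Bool) : |wt ε b| ≤ c := by
  cases b
  · simpa [wt] using (abs_nonneg _).trans hε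
  · simpa [wt] using hε

lemma obq_nonneg (H : ℕ) (v : Fin n → Bool) {σ ε : ℝ} (hσ : |σ| ≤ 1) (hε : |ε| ≤ 1 / 2) (h : ℕ)
    (u : Mode k A) (o : Ob (2 ^ k) n) : 0 ≤ obq H v σ ε h u o := by
  cases u with
  | reg x => exact pt_nonneg _ _
  | mix l b =>
    simp only [obq]; split_ifs
    · exact finO_nonneg (abs_wt hε b) _
    · exact pt_nonneg _ _
  | sig l b =>
    refine sigO_nonneg v ?_ _
    rw [abs_mul, abs_mul]
    have := abs_wt hε b
    have h2 : |(2 : ℝ)| = 2 := by norm_num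
    rw [h2]
    calc 2 * |wt ε b| * |σ| ≤ 1 * 1 := by gcongr; linarith
      _ = 1 := one_mul 1
  | dead l b => exact pt_nonneg _ _

lemma obq_sum (hn : 0 < n) (H : ℕ) (v : Fin n → Bool) (σ ε : ℝ) (h : ℕ) (u : Mode k A) :
    ∑ o : Ob (2 ^ k) n, obq H v σ ε h u o = 1 := by
  cases u with
  | reg x => exact sum_pt _
  | mix l b =>
    simp only [obq]; split_ifs
    · exact sum_finO _
    · exact sum_pt _
  | sig l b => exact sum_sigO hn _ _
  | dead l b => exact sum_pt _

lemma rho_nonneg (H : ℕ) (v : Fin n → Bool) {σ ε : ℝ} (hσ : |σ| ≤ 1) (hε : |ε| ≤ 1 / 2) (h : ℕ)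
    (u : Mode k A) (o : Ob (2 ^ k) n) : 0 ≤ rho H v σ ε h u o := by
  cases u with
  | reg x => simp [rho]
  | mix l b =>
    have := abs_le.1 (abs_wt hε b)
    simp only [rho]; split_ifs <;> first | norm_num; done | linarith
  | sig l b =>
    rcases o with x | ⟨i, d⟩ | t <;> simp only [rho, zero_le_one]
    have : |2 * wt ε b * σ * (sg d * sg (v i))| ≤ 1 := by
      rw [abs_mul, abs_mul, abs_mul]
      have := abs_wt hε b
      have h2 : |(2 : ℝ)| = 2 := by norm_num
      rw [h2]
      calc 2 * |wt ε b| * |σ| * |sg d * sg (v i)| ≤ 1 * 1 * 1 := by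
            gcongr
            · linarith
            · exact abs_sg_mul_le _ _
        _ = 1 := by norm_num
    linarith [(abs_le.1 this).1]
  | dead l b => simp [rho]

lemma wt_zero (b : Bool) : wt 0 b = 0 := by simp [wt]

lemma obq_eq_mul_rho (H : ℕ) (v v₀ : Fin n → Bool) (σ ε : ℝ) (h : ℕ)
    (u : Mode k A) (o : Ob (2 ^ k) n) :
    obq H v σ ε h u o = obq H v₀ σ 0 h u o * rho H v σ ε h u o := by
  cases u with
  | reg x => simp [rho, obq]
  | mix l b =>
    simp only [rho, obq]
    split_ifs with h1 h2 h3
    · subst h2; simp [finO, pt, good_ne_blank, wt_zero]; ring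
    · subst h3; simp [finO, pt, good_ne_blank.symm, wt_zero]; ring
    · simp [finO, pt, h2, h3]
    · simp
  | sig l b =>
    rcases o with x | ⟨i, d⟩ | t <;> simp [rho, obq, sigO, wt_zero]
    field_simp
  | dead l b => simp [rho, obq]

/-- The correlation of two sign vectors. -/
def corr (v v' : Fin n → Bool) : ℝ := ∑ i, sg (v i) * sg (v' i)

/-- An upper bound for the cross moment of the signals of `v` and `v'`; the truncation at
`1` allows it to be raised to powers. -/
def gG (n : ℕ) (c : ℝ) (v v' : Fin n → Bool) : ℝ := 1 + max 0 (c * (corr v v' / n))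

lemma sg_sq (b : Bool) : sg b * sg b = 1 := by cases b <;> simp

/-- One-step cross moment: `1 + c * corr v v' / n` at a signal and `1 + 4 ε²` at the last step,
both absorbed by `ccf`. -/
lemma chi_step (hn : 0 < n) (H : ℕ) (v v' v₀ : Fin n → Bool) (σ ε : ℝ) (h : ℕ)
    (u : Mode k A) :
    ∑ o : Ob (2 ^ k) n, obq H v₀ σ 0 h u o * (rho H v σ ε h u o * rho H v' σ ε h u o *
      ccf H (gG n ((2 * ε * σ) ^ 2) v v') (1 + 4 * ε ^ 2) h u) ≤ 1 := by
  have hn' : (n : ℝ) ≠ 0 := by exact_mod_cast hn.ne'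
  cases u with
  | reg x => simp only [obq, rho, ccf, mul_one, sum_pt, le_refl]
  | mix l b =>
    simp only [obq, rho, ccf, wt_zero]
    by_cases h1 : h = H
    · simp only [h1, if_true]
      rw [sum_finO_mul]
      simp only [if_true, good_ne_blank.symm, if_false, add_zero, sub_zero]
      cases b
      · simp only [wt, Bool.false_eq_true, if_false]; norm_num
      · have : 0 < 1 + 4 * ε ^ 2 := by positivity
        simp only [wt, if_true]
        apply le_of_eq
        field_simp
        ring
    · simp only [h1, if_false, mul_one, sum_pt, le_refl]
  | sig l b =>
    simp only [obq, wt_zero, mul_zero, zero_mul]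
    rw [sum_sigO_mul]
    simp only [rho, ccf, zero_mul, add_zero]
    cases b
    · simp only [wt, Bool.false_eq_true, if_false]
      simp
      field_simp
      exact le_refl _
    · simp only [wt, if_true]
      have hG : 0 < gG n ((2 * ε * σ) ^ 2) v v' := by
        have := le_max_left 0 ((2 * ε * σ) ^ 2 * (corr v v' / n)); unfold gG; linarith
      have hG2 : 1 + (2 * ε * σ) ^ 2 * (corr v v' / n) ≤ gG n ((2 * ε * σ) ^ 2) v v' := by
        have := le_max_right 0 ((2 * ε * σ) ^ 2 * (corr v v' / n)); unfold gG; linarith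
      set g := gG n ((2 * ε * σ) ^ 2) v v'
      have : ∀ i : Fin n, ∑ d : Bool, 1 / (2 * (n : ℝ)) *
          ((1 + 2 * ε * σ * (sg d * sg (v i))) * (1 + 2 * ε * σ * (sg d * sg (v' i))) * g⁻¹) =
          g⁻¹ * (1 / n + (2 * ε * σ) ^ 2 * ((sg (v i) * sg (v' i)) / n)) := by
        intro i; rw [Fintype.sum_bool, sg_true, sg_false]; field_simp; ring
      rw [Finset.sum_congr rfl fun i _ => this i, ← Finset.mul_sum, Finset.sum_add_distrib,
        ← Finset.mul_sum, ← Finset.sum_div, ← Finset.sum_div]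
      simp only [Finset.sum_const, Finset.card_univ, Fintype.card_fin, nsmul_eq_mul]
      rw [mul_one, div_self hn', inv_mul_le_iff₀ hG, mul_one]
      exact hG2
  | dead l b => simp only [obq, rho, ccf, mul_one, sum_pt, le_refl]

end Likelihood

/-! ### Counting the parameters an episode can test -/

section Final
variable {k nh L r n A : ℕ}

/-- A reveal was made after leaving through the hidden location. -/
def Mode.flagR : Mode k A → ℕ
  | .sig _ b => if b then 1 else 0
  | .dead _ b => if b then 1 else 0
  | _ => 0

/-- The coin was started at the hidden location and the password has been respected so far. -/
def Mode.flagF : Mode k A → ℕ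
  | .mix _ b => if b then 1 else 0
  | _ => 0

/-- A reveal was made. -/
def Mode.rev : Mode k A → ℕ
  | .sig _ _ => 1
  | .dead _ _ => 1
  | _ => 0

/-- The dead state was reached after leaving through the hidden location. -/
def Mode.flagD : Mode k A → ℕ
  | .dead _ b => if b then 1 else 0
  | _ => 0

/-- Forget the flag; what remains does not depend on `θ`. -/
def Mode.er : Mode k A → Mode k A
  | .reg x => .reg x
  | .mix l _ => .mix l false
  | .sig l _ => .sig l false
  | .dead l _ => .dead l false

lemma Mode.flagR_le (u : Mode k A) : u.flagR ≤ 1 := by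
  cases u <;> simp only [flagR] <;> (try split_ifs) <;> omega
lemma Mode.flagF_le (u : Mode k A) : u.flagF ≤ 1 := by
  cases u <;> simp only [flagF] <;> (try split_ifs) <;> omega

variable {O' : Type}

/-- The mode, relative to `θ`, after a history. -/
def md (θ : Theta k nh L r A) (l : List (O' × Fin A)) : Mode k A := run (stp θ) (.reg x₀) l

@[simp] lemma md_nil (θ : Theta k nh L r A) : md (O' := O') θ [] = .reg x₀ := rfl

lemma md_concat (θ : Theta k nh L r A) (l : List (O' × Fin A)) (x : O' × Fin A) :
    md θ (l ++ [x]) = stp θ (l.length + 1) (md θ l) x.2 := run_concat _ _ _ _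

lemma seqProd_ccf (θ : Theta k nh L r A) (H : ℕ) (G D : ℝ) (l : List (O' × Fin A))
    (hl : l.length < H) :
    seqProd (fun p _ => ccf H G D (p.length + 1) (md θ p)) l = G⁻¹ ^ (md θ l).flagD := by
  induction l using List.reverseRecOn with
  | nil => simp [Mode.flagD]
  | append_singleton l x ih =>
    simp only [List.length_append, List.length_singleton] at hl
    rw [seqProd_concat, ih (by omega), md_concat]
    have hne : l.length + 1 ≠ H := by omega
    cases hu : md θ l with
    | reg x => simp only [Mode.flagD, ccf, stp]; split_ifs <;> simp
    | mix loc b =>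
      simp only [Mode.flagD, ccf, stp, hne, if_false]; split_ifs <;> simp
    | sig loc b => simp only [Mode.flagD, ccf, stp]; split_ifs <;> simp
    | dead loc b => simp only [Mode.flagD, ccf, stp]; simp

/-- Over a whole episode the compensating factors multiply to a function of the mode before the
last step. -/
lemma seqProd_ccf_last (θ : Theta k nh L r A) (H : ℕ) (G D : ℝ) (l : List (O' × Fin A))
    (hl : l.length + 1 = H) (x : O' × Fin A) :
    seqProd (fun p _ => ccf H G D (p.length + 1) (md θ p)) (l ++ [x]) =
      G⁻¹ ^ (md θ l).flagR * D⁻¹ ^ (md θ l).flagF := by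
  rw [seqProd_concat, seqProd_ccf θ H G D l (by omega), hl]
  cases hu : md θ l with
  | reg x => simp only [Mode.flagD, Mode.flagR, Mode.flagF, ccf]; simp
  | mix loc b => cases b <;> simp [Mode.flagD, Mode.flagR, Mode.flagF, ccf]
  | sig loc b => cases b <;> simp [Mode.flagD, Mode.flagR, Mode.flagF, ccf]
  | dead loc b => simp only [Mode.flagD, Mode.flagR, Mode.flagF, ccf]; simp

lemma er_stp (θ θ' : Theta k nh L r A) (h : ℕ) (u u' : Mode k A) (a : Fin A) (hu : u.er = u'.er) :
    (stp θ h u a).er = (stp θ' h u' a).er := by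
  cases u <;> cases u' <;> simp only [Mode.er, Mode.reg.injEq, Mode.mix.injEq, Mode.sig.injEq,
    Mode.dead.injEq, reduceCtorEq, and_true] at hu <;> subst hu <;> simp only [stp] <;>
    (try split_ifs) <;> simp [Mode.er]

lemma er_md (θ θ' : Theta k nh L r A) (l : List (O' × Fin A)) : (md θ l).er = (md θ' l).er := by
  induction l using List.reverseRecOn with
  | nil => rfl
  | append_singleton l x ih => rw [md_concat, md_concat]; exact er_stp _ _ _ _ _ _ ih

lemma rev_er (u : Mode k A) : u.er.rev = u.rev := by cases u <;> rfl

lemma rev_md (θ θ' : Theta k nh L r A) (l : List (O' × Fin A)) : (md θ l).rev = (md θ' l).rev := by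
  rw [← rev_er, er_md θ θ', rev_er]

/-- If the flag is set, the recorded location is the hidden one. -/
def Mode.good (θ : Theta k nh L r A) : Mode k A → Prop
  | .reg _ => True
  | .mix l b => b = true → l = θ.loc
  | .sig l b => b = true → l = θ.loc
  | .dead l b => b = true → l = θ.loc

lemma good_md (θ : Theta k nh L r A) (l : List (O' × Fin A)) : (md θ l).good θ := by
  induction l using List.reverseRecOn with
  | nil => trivial
  | append_singleton l x ih =>
    rw [md_concat]
    revert ih
    generalize md θ l = u
    intro ih
    cases u <;> simp only [stp] <;> (try split_ifs) <;> simp_all [Mode.good]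

lemma loc_eq_of_flagR {θ θ' : Theta k nh L r A} {l : List (O' × Fin A)}
    (h : (md θ l).flagR = 1) (h' : (md θ' l).flagR = 1) : θ.loc = θ'.loc := by
  have e := er_md θ θ' l
  have g := good_md θ l
  have g' := good_md θ' l
  revert e g g' h h'
  generalize md θ l = u
  generalize md θ' l = u'
  intro h h' e g g'
  cases u <;> cases u' <;> simp_all [Mode.er, Mode.flagR, Mode.good]

lemma rev_of_flagR {θ : Theta k nh L r A} {l : List (O' × Fin A)}
    (h : (md θ l).flagR = 1) : (md θ l).rev = 1 := by
  revert h; cases md θ l <;> simp [Mode.flagR, Mode.rev]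

lemma loc_inj {θ θ' : Theta k nh L r A} (h : θ.loc = θ'.loc) : θ.1 = θ'.1 := by
  simp only [Theta.loc, Prod.mk.injEq, Fin.mk.injEq] at h
  obtain ⟨h1, h2, h3⟩ := h
  refine Prod.ext (Prod.ext (Fin.ext (by omega)) h2) (Fin.ext (by omega))

lemma flagF_inv {θ θ' : Theta k nh L r A} (l : List (O' × Fin A))
    (h : (md θ l).flagF = 1) (h' : (md θ' l).flagF = 1) :
    θ.loc = θ'.loc ∧ ∀ i : Fin L, k + nh + 1 + i.1 ≤ l.length → θ.2 i = θ'.2 i := by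
  induction l using List.reverseRecOn with
  | nil => simp [Mode.flagF] at h
  | append_singleton l x ih =>
    rw [md_concat] at h h'
    have e := er_md θ θ' l
    generalize md θ l = u at *
    generalize md θ' l = u' at *
    cases u with
    | reg y =>
      cases u' <;> simp only [Mode.er, Mode.reg.injEq, reduceCtorEq] at e
      subst e
      simp only [stp] at h h'
      split_ifs at h h' with h1
      · simp [Mode.flagF] at h
      · simp only [Mode.flagF, decide_eq_true_eq, ite_eq_left_iff, zero_ne_one, imp_false,
          not_not] at h h'
        refine ⟨h.symm.trans h', fun i hi => ?_⟩
        have := congrArg Prod.fst h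
        simp only [Theta.loc] at this
        have := θ.1.1.1.2
        simp only [List.length_append, List.length_singleton] at hi
        omega
    | mix loc b =>
      cases u' <;> simp only [Mode.er, Mode.mix.injEq, reduceCtorEq, and_true] at e
      rename_i loc' b'
      simp only [stp] at h h'
      split_ifs at h h' with h1
      · simp [Mode.flagF] at h
      · simp only [Mode.flagF, Bool.and_eq_true, decide_eq_true_eq, ite_eq_left_iff, zero_ne_one,
          imp_false, not_not] at h h'
        obtain ⟨h2, h3⟩ := ih (by simp [Mode.flagF, h.1]) (by simp [Mode.flagF, h'.1])
        refine ⟨h2, fun i hi => ?_⟩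
        simp only [List.length_append, List.length_singleton] at hi
        by_cases hl : k + nh + 1 + i.1 ≤ l.length
        · exact h3 i hl
        · have e1 := h.2 i (by omega)
          have e2 := h'.2 i (by omega)
          exact Subtype.ext (e1.symm.trans e2)
    | sig loc b => simp [stp, Mode.flagF] at h
    | dead loc b => simp [stp, Mode.flagF] at h

lemma eq_of_flagF {θ θ' : Theta k nh L r A} {l : List (O' × Fin A)}
    (hl : l.length = k + nh + L)
    (h : (md θ l).flagF = 1) (h' : (md θ' l).flagF = 1) : θ = θ' := by
  obtain ⟨h1, h2⟩ := flagF_inv l h h'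
  exact Prod.ext (loc_inj h1) (funext fun i => h2 i (by have := i.2; omega))

/-- An episode spells out one location and one password, so it can be right for one `θ` only. -/
lemma sum_flagF_le {l : List (O' × Fin A)} (hl : l.length = k + nh + L) :
    ∑ θ : Theta k nh L r A, ((md θ l).flagF : ℝ) ≤ 1 := by
  by_cases h : ∃ θ : Theta k nh L r A, (md θ l).flagF = 1
  · obtain ⟨θ, hθ⟩ := h
    rw [Finset.sum_eq_single θ]
    · rw [hθ]; simp
    · intro θ' _ hne
      have : (md θ' l).flagF ≠ 1 := fun h' => hne (eq_of_flagF hl h' hθ)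
      have := (md θ' l).flagF_le
      have : (md θ' l).flagF = 0 := by omega
      rw [this]; simp
    · simp
  · push Not at h
    rw [Finset.sum_eq_zero]
    · norm_num
    · intro θ _
      have := h θ
      have := (md θ l).flagF_le
      have : (md θ l).flagF = 0 := by omega
      rw [this]; simp

/-- A reveal tests a single location, that is, a fraction `1 / Nn` of all `θ`. -/
lemma sum_flagR_le (θ₀ : Theta k nh L r A) (l : List (O' × Fin A)) (Nn : ℝ)
    (hNn : Nn = Fintype.card ((Fin nh × Fin (2 ^ k)) × Fin (A - 2))) (hN0 : 0 < Nn) :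
    ∑ θ : Theta k nh L r A, ((md θ l).flagR : ℝ) ≤
      Fintype.card (Theta k nh L r A) / Nn * (md θ₀ l).rev := by
  have hc : (Fintype.card (Theta k nh L r A) : ℝ) / Nn =
      Fintype.card (Fin L → {a : Fin A // r ≤ a.1}) := by
    rw [Fintype.card_prod, Nat.cast_mul, ← hNn, mul_div_cancel_left₀ _ hN0.ne']
  rw [hc]
  by_cases h : ∃ θ : Theta k nh L r A, (md θ l).flagR = 1
  · obtain ⟨θ, hθ⟩ := h
    rw [rev_md θ₀ θ, rev_of_flagR hθ, Fintype.sum_prod_type, Finset.sum_eq_single θ.1]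
    · calc ∑ y, ((md (θ.1, y) l).flagR : ℝ) ≤ ∑ y : Fin L → {a : Fin A // r ≤ a.1}, (1 : ℝ) :=
            Finset.sum_le_sum fun y _ => by exact_mod_cast (md (θ.1, y) l).flagR_le
        _ = _ := by simp
    · intro θ' _ hne
      refine Finset.sum_eq_zero fun y _ => ?_
      have : (md (θ', y) l).flagR ≠ 1 := fun h' => hne (loc_inj (loc_eq_of_flagR h' hθ))
      have := (md (θ', y) l).flagR_le
      have : (md (θ', y) l).flagR = 0 := by omega
      rw [this]; simp
    · simp
  · push Not at h
    rw [Finset.sum_eq_zero]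
    · positivity
    · intro θ _
      have := h θ
      have := (md θ l).flagR_le
      have : (md θ l).flagR = 0 := by omega
      rw [this]; simp

end Final

/-! ### Regret as a sum over episodes -/

section Regret
variable {S O A : Type} [Fintype S] [Fintype O] [Fintype A] {H : ℕ}

/-- A per-episode lower bound `g` for the suboptimality, valid in mean for every policy, adds up to
a lower bound for the regret of every algorithm. -/
lemma regret_lower (M : POMDP S O A H) (𝔄 : Algorithm O A H) (T : ℕ)
    (h0 : ∀ π τ, 0 ≤ M.trajProb π τ) (h1 : ∀ π, ∑ τ, M.trajProb π τ = 1)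
    (g : (Fin H → O × A) → ℝ)
    (hg : ∀ π, ∑ τ, M.trajProb π τ * g τ ≤ M.optValue - M.value π) :
    seqE (fun p τ => M.trajProb (𝔄.policyAt p) τ) T (seqSum fun _ τ => g τ) ≤
      M.expRegret 𝔄 T := by
  have : M.expRegret 𝔄 T = seqE (fun p τ => M.trajProb (𝔄.policyAt p) τ) T
      (seqSum fun p _ => M.optValue - M.value (𝔄.policyAt p)) := by
    unfold POMDP.expRegret POMDP.transcriptProb seqE
    refine Finset.sum_congr rfl fun τs _ => ?_
    rw [prod_take_eq_seqProd (fun p τ => M.trajProb (𝔄.policyAt p) τ),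
      sum_take_eq_seqSum (fun p _ => M.optValue - M.value (𝔄.policyAt p))]
  rw [this]
  refine seqE_seqSum_le (K := fun p τ => M.trajProb (𝔄.policyAt p) τ)
    (fun p τ => h0 (𝔄.policyAt p) τ) (fun p => h1 (𝔄.policyAt p)) (fun p => ?_) T
  rw [← Finset.sum_mul, h1, one_mul]
  exact hg _

end Regret

/-! ### Optimal play -/

section OptimalPlay
variable {k nh L r A : ℕ}

/-- The actions that shift the bits of the hidden register in, leave through the hidden location,
then wait (with the action `A - 1 ≥ r`) and enter the password. -/
def optSeq (hA : 3 ≤ A) (θ : Theta k nh L r A) (h : ℕ) : Fin A :=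
  if h ≤ k + θ.1.1.1.1 then ⟨(θ.1.1.2.1 / 2 ^ (k + θ.1.1.1.1 - h)) % 2, by omega⟩
  else if h = k + θ.1.1.1.1 + 1 then ⟨θ.1.2.1 + 2, by have := θ.1.2.2; omega⟩
  else if hh : k + nh + 1 ≤ h ∧ h - (k + nh + 1) < L then (θ.2 ⟨h - (k + nh + 1), hh.2⟩).1
  else ⟨A - 1, by omega⟩

lemma openMode_reg (hA : 3 ≤ A) (θ : Theta k nh L r A) (t : ℕ) (ht : t ≤ k + θ.1.1.1.1) :
    openMode (stp θ) (.reg x₀) (optSeq hA θ) t =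
      .reg ⟨θ.1.1.2.1 / 2 ^ (k + θ.1.1.1.1 - t), (Nat.div_le_self _ _).trans_lt θ.1.1.2.2⟩ := by
  induction t with
  | zero =>
    simp only [openMode, x₀, Mode.reg.injEq, Fin.mk.injEq]
    symm
    refine Nat.div_eq_of_lt (lt_of_lt_of_le θ.1.1.2.2 ?_)
    exact Nat.pow_le_pow_right (by norm_num) (by omega)
  | succ t ih =>
    have ho : optSeq hA θ (t + 1) =
        ⟨(θ.1.1.2.1 / 2 ^ (k + θ.1.1.1.1 - (t + 1))) % 2, by omega⟩ := by
      simp only [optSeq]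
      rw [if_pos ht]
    rw [openMode, ih (by omega), ho, stp, if_pos (Nat.mod_lt _ (by norm_num))]
    simp only [shift, Mode.reg.injEq, Fin.mk.injEq]
    obtain ⟨d, hd⟩ : ∃ d, k + θ.1.1.1.1 - (t + 1) = d := ⟨_, rfl⟩
    have hd' : k + θ.1.1.1.1 - t = d + 1 := by omega
    rw [hd, hd', pow_succ, ← Nat.div_div_eq_div_mul, Nat.div_add_mod]
    exact Nat.mod_eq_of_lt ((Nat.div_le_self _ _).trans_lt θ.1.1.2.2)

lemma openMode_mix (hA : 3 ≤ A) (hr : r < A) (θ : Theta k nh L r A) (t : ℕ)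
    (ht : k + θ.1.1.1.1 + 1 ≤ t) :
    openMode (stp θ) (.reg x₀) (optSeq hA θ) t = .mix θ.loc true := by
  induction t, ht using Nat.le_induction with
  | base =>
    have ho : optSeq hA θ (k + θ.1.1.1.1 + 1) =
        ⟨θ.1.2.1 + 2, by have := θ.1.2.2; omega⟩ := by
      simp only [optSeq]
      rw [if_neg (by omega)]
      simp only [if_true]
    rw [openMode, openMode_reg hA θ _ le_rfl, ho, stp, if_neg (by simp)]
    simp only [Nat.sub_self, pow_zero, Nat.div_one]
    have : (k + θ.1.1.1.1 + 1, (⟨θ.1.1.2.1, θ.1.1.2.2⟩ : Fin (2 ^ k)),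
        (⟨θ.1.2.1 + 2, by have := θ.1.2.2; omega⟩ : Fin A)) = θ.loc := by
      simp only [Theta.loc, Prod.mk.injEq]
      refine ⟨by omega, trivial⟩
    rw [this]
    simp
  | succ t ht ih =>
    have h1 : ¬ t + 1 ≤ k + θ.1.1.1.1 := by omega
    have h2 : ¬ t + 1 = k + θ.1.1.1.1 + 1 := by omega
    have hr' : ¬ (optSeq hA θ (t + 1)).1 < r := by
      simp only [optSeq, h1, if_false, h2]
      split_ifs with hh
      · exact not_lt.2 (θ.2 _).2
      · simp only; omega
    have hok : θ.okAct (t + 1) (optSeq hA θ (t + 1)) := by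
      intro i hi
      simp only [optSeq, h1, if_false, h2]
      have := i.2
      rw [dif_pos ⟨by omega, by omega⟩]
      have hi' : (⟨t + 1 - (k + nh + 1), by omega⟩ : Fin L) = i := Fin.ext (by simp only; omega)
      rw [hi']
    simp only [openMode, ih, stp, hr', if_false, hok]
    simp

end OptimalPlay

/-! ### Episode law and value of the hard instances -/

section ModelValue
variable {k nh L r n A : ℕ} {S' O' : Type} [Fintype S'] [Fintype O']

/-- Expected reward given the mode at the last step. -/
def gv (ε : ℝ) : Mode k A → ℝ
  | .mix _ b => 1 / 2 + wt ε b
  | _ => 0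

lemma obq_good (H : ℕ) (v : Fin n → Bool) (σ ε : ℝ) (u : Mode k A) :
    obq H v σ ε H u goodO = gv ε u := by
  cases u with
  | reg x => simp [obq, gv, pt, goodO]
  | mix l b => simp [obq, gv, finO, pt, good_ne_blank]
  | sig l b => simp [obq, gv, sigO, goodO]
  | dead l b => simp [obq, gv, pt, goodO, deadO]

variable (e : S' ≃ St (2 ^ k)) (eo : O' ≃ Ob (2 ^ k) n) (hn : 0 < n) {σ : ℝ}
    (hσ : |σ| ≤ 1) (θ θ' : Theta k nh L r A) (v : Fin n → Bool) {ε : ℝ} (hε : |ε| ≤ 1 / 2)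

/-- The law of the next observation-action pair of an episode of the hard instance. -/
def hk (eo : O' ≃ Ob (2 ^ k) n) (θ : Theta k nh L r A) (v : Fin n → Bool) (σ ε : ℝ)
    (π : Policy O' (Fin A)) : List (O' × Fin A) → O' × Fin A → ℝ :=
  histKernel (stp θ) (.reg x₀) (fun h u o => obq (k + nh + L + 1) v σ ε h u (eo o)) π

lemma hk_apply (σ ε : ℝ) (π : Policy O' (Fin A)) (l : List (O' × Fin A)) (x : O' × Fin A) :
    hk eo θ v σ ε π l x =
      obq (k + nh + L + 1) v σ ε (l.length + 1) (md θ l) (eo x.1) * π.act l x.1 x.2 := rfl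

lemma hk_nonneg {k nh L r n A : ℕ} {O' : Type} (eo : O' ≃ Ob (2 ^ k) n) {σ : ℝ}
    (hσ : |σ| ≤ 1) (θ : Theta k nh L r A) (v : Fin n → Bool) {ε : ℝ} (hε : |ε| ≤ 1 / 2)
    (π : Policy O' (Fin A)) (l : List (O' × Fin A)) (x : O' × Fin A) :
    0 ≤ hk eo θ v σ ε π l x :=
  mul_nonneg (obq_nonneg _ v hσ hε _ _ _) (π.act_nonneg _ _ _)

lemma hk_sum (σ ε : ℝ) (π : Policy O' (Fin A)) (l : List (O' × Fin A)) (g : O' → ℝ) :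
    ∑ x, hk eo θ v σ ε π l x * g x.1 =
      ∑ o, obq (k + nh + L + 1) v σ ε (l.length + 1) (md θ l) (eo o) * g o :=
  histKernel_sum _ _ _ _ _ _

lemma hk_sum_one (eo : O' ≃ Ob (2 ^ k) n) (hn : 0 < n) (θ : Theta k nh L r A)
    (v : Fin n → Bool) (σ ε : ℝ) (π : Policy O' (Fin A)) (l : List (O' × Fin A)) :
    ∑ x, hk eo θ v σ ε π l x = 1 := by
  have := hk_sum eo θ v σ ε π l (fun _ => 1)
  simp only [mul_one] at this
  rw [this, eo.sum_comp (fun o => obq (k + nh + L + 1) v σ ε (l.length + 1) (md θ l) o)]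
  exact obq_sum hn _ _ _ _ _ _

lemma trajProb_hk (hθ : θ' = θ ∨ ε = 0)
    (π : Policy O' (Fin A)) (τ : Fin (k + nh + L + 1) → O' × Fin A) :
    (hardM e eo hn hσ θ' v hε).trajProb π τ = seqProd (hk eo θ v σ ε π) (List.ofFn τ) :=
  trajProb_eq_seqProd (hardM_filters e eo hn hσ θ θ' v hε hθ) π τ

lemma trajProb_nonneg (π : Policy O' (Fin A)) (τ : Fin (k + nh + L + 1) → O' × Fin A) :
    0 ≤ (hardM e eo hn hσ θ v hε).trajProb π τ := by
  rw [trajProb_hk e eo hn hσ θ θ v hε (Or.inl rfl)]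
  exact seqProd_nonneg (fun p x => hk_nonneg eo hσ θ v hε π p x) _

lemma sum_trajProb_hk (hθ : θ' = θ ∨ ε = 0)
    (π : Policy O' (Fin A)) (f : List (O' × Fin A) → ℝ) :
    ∑ τ, (hardM e eo hn hσ θ' v hε).trajProb π τ * f (List.ofFn τ) =
      seqE (hk eo θ v σ ε π) (k + nh + L + 1) f :=
  sum_trajProb (hardM_filters e eo hn hσ θ θ' v hε hθ) π f

lemma sum_trajProb_one (π : Policy O' (Fin A)) :
    ∑ τ, (hardM e eo hn hσ θ v hε).trajProb π τ = 1 := by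
  have := sum_trajProb_hk e eo hn hσ θ θ v hε (Or.inl rfl) π (fun _ => 1)
  simp only [mul_one] at this
  rw [this, seqE_one (hk_sum_one eo hn θ v σ ε π)]

/-- The mode just before the last observation. -/
def fin (θ : Theta k nh L r A) (τ : Fin (k + nh + L + 1) → O' × Fin A) : Mode k A :=
  md θ (List.ofFn τ).dropLast

lemma sum_trajProb_fin (hθ : θ' = θ ∨ ε = 0)
    (π : Policy O' (Fin A)) (g : Mode k A → ℝ) :
    ∑ τ, (hardM e eo hn hσ θ' v hε).trajProb π τ * g (fin θ τ) =
      seqE (hk eo θ v σ ε π) (k + nh + L) (fun l => g (md θ l)) := by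
  have := sum_trajProb_hk e eo hn hσ θ θ' v hε hθ π (fun l => g (md θ l.dropLast))
  unfold fin
  rw [this, seqE_succ]
  refine seqE_congr fun l _ => ?_
  simp only [List.dropLast_concat]
  rw [← Finset.sum_mul, hk_sum_one eo hn, one_mul]

lemma value_eq (hθ : θ' = θ ∨ ε = 0)
    (π : Policy O' (Fin A)) :
    (hardM e eo hn hσ θ' v hε).value π =
      seqE (hk eo θ v σ ε π) (k + nh + L) (fun l => gv ε (md θ l)) := by
  have h1 : (hardM e eo hn hσ θ' v hε).value π =
      ∑ τ, (hardM e eo hn hσ θ' v hε).trajProb π τ *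
        (fun l : List (O' × Fin A) => (l.getLast?.map fun x => pt goodO (eo x.1)).getD 0)
          (List.ofFn τ) := by
    unfold POMDP.value
    refine Finset.sum_congr rfl fun τ _ => ?_
    congr 1
    rw [Fin.sum_univ_castSucc, Finset.sum_eq_zero, zero_add, ofFn_succ_concat]
    · simp [hardM]
    · intro i _
      have := i.2
      simp only [hardM, Fin.val_castSucc]
      exact if_neg (by omega)
  rw [h1]
  have h2 := sum_trajProb_hk e eo hn hσ θ θ' v hε hθ π
    (fun l => (l.getLast?.map fun x => pt goodO (eo x.1)).getD 0)
  refine Eq.trans h2 ?_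
  rw [seqE_succ]
  refine seqE_congr fun l hl => ?_
  simp only [List.getLast?_concat, Option.map_some, Option.getD_some]
  rw [hk_sum eo θ v σ ε π l (fun o => pt goodO (eo o)), hl,
    eo.sum_comp (fun o => obq (k + nh + L + 1) v σ ε (k + nh + L + 1) (md θ l) o * pt goodO o)]
  simp only [mul_comm (obq _ _ _ _ _ _ _)]
  rw [sum_pt_mul, obq_good]

lemma value_eq_fin (hθ : θ' = θ ∨ ε = 0)
    (π : Policy O' (Fin A)) :
    (hardM e eo hn hσ θ' v hε).value π =
      ∑ τ, (hardM e eo hn hσ θ' v hε).trajProb π τ * gv ε (fin θ τ) := by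
  rw [value_eq e eo hn hσ θ θ' v hε hθ, sum_trajProb_fin e eo hn hσ θ θ' v hε hθ]

/-- The value exceeds `1 / 2` only if the location and the password were both right. -/
lemma gv_le (u : Mode k A) (_ : 0 ≤ ε) : gv ε u ≤ 1 / 2 + ε * u.flagF := by
  cases u with
  | reg x => simp [gv, Mode.flagF]
  | mix l b => cases b <;> simp [gv, Mode.flagF, wt]
  | sig l b => simp [gv, Mode.flagF]
  | dead l b => simp [gv, Mode.flagF]

/-- In the null instance a reveal forfeits the expected reward `1 / 2`. -/
lemma gv_zero_le (u : Mode k A) : gv 0 u ≤ 1 / 2 - 1 / 2 * u.rev := by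
  cases u with
  | reg x => simp [gv, Mode.rev]
  | mix l b => simp [gv, Mode.rev, wt_zero]
  | sig l b => simp [gv, Mode.rev]
  | dead l b => simp [gv, Mode.rev]

lemma value_le_optValue (π : Policy O' (Fin A)) (hε0 : 0 ≤ ε) :
    (hardM e eo hn hσ θ v hε).value π ≤ (hardM e eo hn hσ θ v hε).optValue := by
  refine le_ciSup (f := fun π => (hardM e eo hn hσ θ v hε).value π) ⟨1, ?_⟩ π
  rintro _ ⟨π, rfl⟩
  simp only
  rw [value_eq_fin e eo hn hσ θ θ v hε (Or.inl rfl),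
    ← sum_trajProb_one e eo hn hσ θ v hε π]
  refine Finset.sum_le_sum fun τ _ => ?_
  refine mul_le_of_le_one_right (trajProb_nonneg e eo hn hσ θ v hε π τ) ?_
  refine (gv_le _ hε0).trans ?_
  have h1 : ((fin θ τ).flagF : ℝ) ≤ 1 := by exact_mod_cast (fin θ τ).flagF_le
  have := (abs_le.1 hε).2
  nlinarith

lemma optValue_ge (hθ : θ' = θ ∨ ε = 0)
    (hA : 3 ≤ A) (hr : r < A) (hL : 0 < L) (hε0 : 0 ≤ ε) :
    1 / 2 + ε ≤ (hardM e eo hn hσ θ' v hε).optValue := by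
  refine le_trans ?_ (value_le_optValue e eo hn hσ θ' v hε (openLoop (optSeq hA θ)) hε0)
  rw [value_eq e eo hn hσ θ θ' v hε hθ]
  have := seqE_openLoop (stp θ) (.reg x₀)
    (fun h u o => obq (k + nh + L + 1) v σ ε h u (eo o))
    (fun h u => by
      rw [eo.sum_comp (fun o => obq (k + nh + L + 1) v σ ε h u o)]; exact obq_sum hn _ _ _ _ _ _)
    (optSeq hA θ) (k + nh + L) (gv ε)
  unfold hk md
  rw [this, openMode_mix hA hr θ _ (by have := θ.1.1.1.2; omega)]
  simp [gv, wt]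

end ModelValue

/-! ### The change of measure for the hard instances -/

section Apply
variable {k nh L r n A : ℕ} {S' O' : Type} [Fintype S'] [Fintype O']

/-- The likelihood ratio of an episode of `(θ, v)` against the null instance. It does not
involve the policy. -/
def lik (eo : O' ≃ Ob (2 ^ k) n) (σ ε : ℝ) (θ : Theta k nh L r A) (v : Fin n → Bool)
    (τ : Fin (k + nh + L + 1) → O' × Fin A) : ℝ :=
  seqProd (fun p x => rho (k + nh + L + 1) v σ ε (p.length + 1) (md θ p) (eo x.1)) (List.ofFn τ)

lemma abs_zero_half : |(0 : ℝ)| ≤ 1 / 2 := by norm_num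

variable (e : S' ≃ St (2 ^ k)) (eo : O' ≃ Ob (2 ^ k) n) (hn : 0 < n) {σ : ℝ}
    (hσ : |σ| ≤ 1) (θ₀ θ : Theta k nh L r A) (v v₀ : Fin n → Bool) {ε : ℝ} (hε : |ε| ≤ 1 / 2)

lemma trajProb_lik (π : Policy O' (Fin A)) (τ : Fin (k + nh + L + 1) → O' × Fin A) :
    (hardM e eo hn hσ θ₀ v₀ abs_zero_half).trajProb π τ * lik eo σ ε θ v τ =
      (hardM e eo hn hσ θ v hε).trajProb π τ := by
  rw [trajProb_hk e eo hn hσ θ θ₀ v₀ abs_zero_half (Or.inr rfl),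
    trajProb_hk e eo hn hσ θ θ v hε (Or.inl rfl), lik, ← seqProd_mul]
  congr 1
  funext p x
  rw [hk_apply, hk_apply, obq_eq_mul_rho _ v v₀ σ ε]
  ring

/-- Cross moment of the likelihood ratios of one episode, in the form required by `core_one`. -/
lemma chi_traj (e : S' ≃ St (2 ^ k)) (eo : O' ≃ Ob (2 ^ k) n) (hn : 0 < n) {σ : ℝ}
    (hσ : |σ| ≤ 1) (θ₀ θ : Theta k nh L r A) (v v₀ : Fin n → Bool) {ε : ℝ} (hε : |ε| ≤ 1 / 2)
    (v' : Fin n → Bool) (π : Policy O' (Fin A)) :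
    ∑ τ, (hardM e eo hn hσ θ₀ v₀ abs_zero_half).trajProb π τ *
      (lik eo σ ε θ v τ * lik eo σ ε θ v' τ *
        ((gG n ((2 * ε * σ) ^ 2) v v')⁻¹ ^ (fin θ τ).flagR *
          (1 + 4 * ε ^ 2)⁻¹ ^ (fin θ τ).flagF)) ≤ 1 := by
  set H := k + nh + L + 1 with hH
  set G := gG n ((2 * ε * σ) ^ 2) v v' with hG
  set D := 1 + 4 * ε ^ 2 with hD
  set Y : List (O' × Fin A) → O' × Fin A → ℝ := fun p x =>
    rho H v σ ε (p.length + 1) (md θ p) (eo x.1) * rho H v' σ ε (p.length + 1) (md θ p) (eo x.1) *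
      ccf H G D (p.length + 1) (md θ p) with hY
  have hG0 : 0 ≤ G := by
    have := le_max_left 0 ((2 * ε * σ) ^ 2 * (corr v v' / n)); rw [hG]; unfold gG; linarith
  have hD0 : 0 ≤ D := by positivity
  have hc0 : ∀ h (u : Mode k A), 0 ≤ ccf H G D h u := by
    intro h u
    cases u <;> simp only [ccf] <;> (try split_ifs) <;> positivity
  have h1 : ∀ τ : Fin H → O' × Fin A, lik eo σ ε θ v τ * lik eo σ ε θ v' τ *
      (G⁻¹ ^ (fin θ τ).flagR * D⁻¹ ^ (fin θ τ).flagF) = seqProd Y (List.ofFn τ) := by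
    intro τ
    rw [hY, seqProd_mul, seqProd_mul]
    congr 1
    rw [fin, ofFn_succ_concat, List.dropLast_concat, seqProd_ccf_last θ H G D _ (by simp [hH])]
  rw [Finset.sum_congr rfl fun τ _ => by rw [h1 τ]]
  have h2 := sum_trajProb_hk e eo hn hσ θ θ₀ v₀ abs_zero_half (Or.inr rfl) π (seqProd Y)
  rw [h2]
  refine seqE_prod_le_one (hk_nonneg eo hσ θ v₀ abs_zero_half π) (fun p x => ?_) (fun p => ?_) _
  · exact mul_nonneg (mul_nonneg (rho_nonneg _ v hσ hε _ _ _) (rho_nonneg _ v' hσ hε _ _ _))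
      (hc0 _ _)
  · have h3 := hk_sum eo θ v₀ σ 0 π p (fun o =>
      rho H v σ ε (p.length + 1) (md θ p) (eo o) * rho H v' σ ε (p.length + 1) (md θ p) (eo o) *
        ccf H G D (p.length + 1) (md θ p))
    rw [h3, eo.sum_comp (fun o => obq H v₀ σ 0 (p.length + 1) (md θ p) o *
      (rho H v σ ε (p.length + 1) (md θ p) o * rho H v' σ ε (p.length + 1) (md θ p) o *
        ccf H G D (p.length + 1) (md θ p)))]
    exact chi_step hn H v v' v₀ σ ε _ _

/-- The abstract alternative `core_two` for the hard instances. -/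
theorem core_apply (hA : 3 ≤ A) (hr : r < A) (hL : 0 < L)
    (𝔄 : Algorithm O' (Fin A) (k + nh + L + 1)) {n₁ n₂ : ℕ} (hn₁ : 0 < n₁)
    (hn₂ : 0 < n₂) (hε0 : 0 ≤ ε)
    (hχ2 : ∑ v : Fin n → Bool, ∑ v', gG n ((2 * ε * σ) ^ 2) v v' ^ n₁ * (1 + 4 * ε ^ 2) ^ n₂ ≤
      (1 + 1 / 16) * (Fintype.card (Fin n → Bool) : ℝ) ^ 2) (T : ℕ)
    {Nn : ℝ} (hNn : Nn = Fintype.card ((Fin nh × Fin (2 ^ k)) × Fin (A - 2))) (hN0 : 0 < Nn)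
    (hΘ : 8 ≤ Fintype.card (Theta k nh L r A))
    (hΘ2 : 8 * (T : ℝ) ≤ Fintype.card (Theta k nh L r A) * n₂)
    {B : ℝ} (hB1 : B ≤ Nn * n₁ / 16) (hB2 : B ≤ 3 / 8 * ε * T) :
    B ≤ (hardM e eo hn hσ θ₀ v₀ abs_zero_half).expRegret 𝔄 T ∨
      ∃ (θ : Theta k nh L r A) (v : Fin n → Bool), B ≤ (hardM e eo hn hσ θ v hε).expRegret 𝔄 T := by
  have : Nonempty (Theta k nh L r A) := ⟨θ₀⟩
  set M₀ := hardM e eo hn hσ θ₀ v₀ abs_zero_half with hM₀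
  have h0 := trajProb_nonneg e eo hn hσ θ₀ v₀ abs_zero_half
  have h1 := sum_trajProb_one e eo hn hσ θ₀ v₀ abs_zero_half
  refine core_two (X := Fin (k + nh + L + 1) → O' × Fin A) (V := Fin n → Bool)
    (Θ := Theta k nh L r A)
    (K := fun p τ => M₀.trajProb (𝔄.policyAt p) τ) (fun p τ => h0 _ _) (fun p => h1 _)
    (ℓ := fun θ v τ => lik eo σ ε θ v τ) ?_ ?_ (R := fun θ τ => (fin θ τ).flagR)
    (F := fun θ τ => (fin θ τ).flagF) (fun θ τ => Mode.flagR_le _) (fun θ τ => Mode.flagF_le _)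
    hn₁ hn₂ (G := gG n ((2 * ε * σ) ^ 2)) (D := 1 + 4 * ε ^ 2) ?_ ?_
    (fun θ v v' p => chi_traj e eo hn hσ θ₀ θ v v₀ hε v' _) hχ2 T
    (rev := fun τ => (fin θ₀ τ).rev) hN0
    (fun τ => sum_flagR_le θ₀ _ Nn hNn hN0) ?_ hΘ hΘ2 hε0 hB1 hB2 ?_ ?_
  · exact fun θ v τ => seqProd_nonneg (fun p x => rho_nonneg _ v hσ hε _ _ _) _
  · intro θ v p
    simp only [hM₀, trajProb_lik e eo hn hσ θ₀ θ v v₀ hε]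
    exact sum_trajProb_one e eo hn hσ θ v hε _
  · intro v v'
    have := le_max_left 0 ((2 * ε * σ) ^ 2 * (corr v v' / n)); unfold gG; linarith
  · nlinarith [sq_nonneg ε]
  · intro τ
    have := sum_flagF_le (k := k) (nh := nh) (L := L) (r := r) (l := (List.ofFn τ).dropLast)
      (by simp)
    exact_mod_cast this
  · rw [← seqE_const_mul]
    have := regret_lower M₀ 𝔄 T h0 h1 (fun τ => 1 / 2 * ((fin θ₀ τ).rev : ℝ)) fun π => by
      have h2 := optValue_ge e eo hn hσ θ₀ θ₀ v₀ abs_zero_half (Or.inl rfl) hA hr hL le_rfl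
      have h3 : M₀.value π ≤ ∑ τ, M₀.trajProb π τ * (1 / 2 - 1 / 2 * ((fin θ₀ τ).rev : ℝ)) := by
        rw [value_eq_fin e eo hn hσ θ₀ θ₀ v₀ abs_zero_half (Or.inl rfl)]
        exact Finset.sum_le_sum fun τ _ => mul_le_mul_of_nonneg_left (gv_zero_le _) (h0 _ _)
      simp only [mul_sub, Finset.sum_sub_distrib, ← Finset.sum_mul] at h3
      rw [h1] at h3
      linarith
    refine le_trans (le_of_eq ?_) this
    refine seqE_congr fun l hl => ?_
    clear hl
    rw [cnt_eq_seqSum]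
    induction l using List.reverseRecOn with
    | nil => simp
    | append_singleton l x ih => rw [seqSum_concat, seqSum_concat, mul_add, ih]
  · intro θ v
    simp only [hM₀, trajProb_lik e eo hn hσ θ₀ θ v v₀ hε]
    have h0 := trajProb_nonneg e eo hn hσ θ v hε
    have h1 := sum_trajProb_one e eo hn hσ θ v hε
    rw [← seqE_const_mul]
    have := regret_lower (hardM e eo hn hσ θ v hε) 𝔄 T h0 h1
      (fun τ => ε * (1 - ((fin θ τ).flagF : ℝ))) fun π => by
      have h2 := optValue_ge e eo hn hσ θ θ v hε (Or.inl rfl) hA hr hL hε0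
      have h3 : (hardM e eo hn hσ θ v hε).value π ≤
          ∑ τ, (hardM e eo hn hσ θ v hε).trajProb π τ *
            (1 / 2 + ε - ε * (1 - ((fin θ τ).flagF : ℝ))) := by
        rw [value_eq_fin e eo hn hσ θ θ v hε (Or.inl rfl)]
        refine Finset.sum_le_sum fun τ _ => mul_le_mul_of_nonneg_left ?_ (h0 _ _)
        linarith [gv_le (fin θ τ) hε0]
      simp only [mul_sub (POMDP.trajProb _ _ _), Finset.sum_sub_distrib, ← Finset.sum_mul] at h3
      rw [h1] at h3
      linarith
    refine le_trans (le_of_eq ?_) this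
    have h4 : ∀ l : List (Fin (k + nh + L + 1) → O' × Fin A),
        ε * ((l.length : ℝ) - cnt (fun τ => (fin θ τ).flagF) l) =
          seqSum (fun _ τ => ε * (1 - ((fin θ τ).flagF : ℝ))) l := by
      intro l
      induction l using List.reverseRecOn with
      | nil => simp [cnt]
      | append_singleton l x ih =>
        rw [seqSum_concat, ← ih, cnt_concat, List.length_append]; push_cast; simp; ring
    refine seqE_congr fun l hl => ?_
    rw [← h4, hl]

end Apply

/-! ### The second moment of the mixture over sign vectors -/

section ChiSquare
variable {n : ℕ}

/-- Linearization of `exp (max 0 (β x))` by convexity: the small factor `β` comes out in front. -/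
lemma exp_max_le {β x : ℝ} (h0 : 0 ≤ β) (h1 : β ≤ 1) :
    Real.exp (max 0 (β * x)) ≤ 1 + β * (Real.exp x + Real.exp (-x)) := by
  have hp1 := Real.exp_pos x
  have hp2 := Real.exp_pos (-x)
  rcases le_total 0 (β * x) with h | h
  · rw [max_eq_right h]
    have := convexOn_exp.2 (Set.mem_univ x) (Set.mem_univ 0) h0 (sub_nonneg.2 h1) (by ring)
    simp only [smul_eq_mul, mul_zero, add_zero, Real.exp_zero, mul_one] at this
    nlinarith [mul_nonneg h0 hp2.le]
  · rw [max_eq_left h, Real.exp_zero]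
    nlinarith [mul_nonneg h0 hp2.le, mul_nonneg h0 hp1.le]

lemma sum_exp_corr (v : Fin n → Bool) (t : ℝ) :
    ∑ v' : Fin n → Bool, Real.exp (t * corr v v') = (2 * Real.cosh t) ^ n := by
  have h : ∀ v' : Fin n → Bool, Real.exp (t * corr v v') =
      ∏ i, Real.exp (t * (sg (v i) * sg (v' i))) := by
    intro v'; rw [corr, Finset.mul_sum, Real.exp_sum]
  rw [Finset.sum_congr rfl fun v' _ => h v']
  rw [← Fintype.prod_sum (fun i b => Real.exp (t * (sg (v i) * sg b)))]
  have : ∀ i, ∑ b, Real.exp (t * (sg (v i) * sg b)) = 2 * Real.cosh t := by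
    intro i
    rw [Real.cosh_eq]
    cases v i <;> simp <;> ring
  rw [Finset.prod_congr rfl fun i _ => this i]
  simp

lemma sum_exp_corr_le (hn : 0 < n) (v : Fin n → Bool) (t : ℝ) (ht : t ^ 2 * n = 1) :
    ∑ v' : Fin n → Bool, Real.exp (t * corr v v') ≤ 2 * 2 ^ n := by
  rw [sum_exp_corr, mul_pow, mul_comm]
  have h1 : Real.cosh t ^ n ≤ Real.exp (1 / 2) := by
    calc Real.cosh t ^ n ≤ Real.exp (t ^ 2 / 2) ^ n :=
          pow_le_pow_left₀ (Real.cosh_pos t).le (Real.cosh_le_exp_half_sq t) n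
      _ = Real.exp (1 / 2) := by rw [← Real.exp_nat_mul]; congr 1; linarith
  have h2 : Real.exp (1 / 2) ≤ 2 := by
    have h3 : Real.exp (1 / 2) * Real.exp (1 / 2) = Real.exp 1 := by
      rw [← Real.exp_add]; norm_num
    have h4 := Real.exp_one_lt_d9
    nlinarith [Real.exp_pos (1 / 2)]
  gcongr
  exact h1.trans h2

/-- Since `corr v v'` is typically of order `√n` for random signs, `n₁` can be as large as a
multiple of `√n / c` before the mixture over `v` becomes distinguishable from the null. -/
lemma chi2_bound (hn : 0 < n) {c ε : ℝ} (hc : 0 ≤ c) {n₁ n₂ : ℕ}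
    (h1 : n₁ * c ≤ Real.sqrt n / 100) (h2 : 4 * ε ^ 2 * n₂ ≤ 1 / 50) :
    ∑ v : Fin n → Bool, ∑ v', gG n c v v' ^ n₁ * (1 + 4 * ε ^ 2) ^ n₂ ≤
      (1 + 1 / 16) * (Fintype.card (Fin n → Bool) : ℝ) ^ 2 := by
  have hn' : (0 : ℝ) < n := by exact_mod_cast hn
  have hs : 0 < Real.sqrt n := Real.sqrt_pos.2 hn'
  have hss : Real.sqrt n * Real.sqrt n = n := Real.mul_self_sqrt hn'.le
  set β := n₁ * c / Real.sqrt n with hβ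
  have hβ0 : 0 ≤ β := by positivity
  have hβ1 : β ≤ 1 / 100 := by rw [hβ, div_le_iff₀ hs]; linarith
  set t := 1 / Real.sqrt n with ht
  have ht2 : t ^ 2 * n = 1 := by rw [ht, div_pow, sq (Real.sqrt n), hss]; field_simp
  have hD : (1 + 4 * ε ^ 2) ^ n₂ ≤ 50 / 49 := by
    calc (1 + 4 * ε ^ 2) ^ n₂ ≤ Real.exp (4 * ε ^ 2) ^ n₂ := by
          gcongr; linarith [Real.add_one_le_exp (4 * ε ^ 2)]
      _ = Real.exp (4 * ε ^ 2 * n₂) := by rw [← Real.exp_nat_mul]; congr 1; ring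
      _ ≤ Real.exp (1 / 50) := Real.exp_le_exp.2 h2
      _ ≤ 50 / 49 := by
        have h3 := Real.add_one_le_exp (-(1 / 50 : ℝ))
        have h4 : Real.exp (1 / 50) * Real.exp (-(1 / 50)) = 1 := by
          rw [← Real.exp_add]; simp
        nlinarith [Real.exp_pos (1 / 50)]
  have hG : ∀ v v' : Fin n → Bool, gG n c v v' ^ n₁ ≤
      1 + β * (Real.exp (t * corr v v') + Real.exp (-t * corr v v')) := by
    intro v v'
    have hm := le_max_left 0 (c * (corr v v' / n))
    calc gG n c v v' ^ n₁ ≤ Real.exp (max 0 (c * (corr v v' / n))) ^ n₁ := by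
          unfold gG
          gcongr
          linarith [Real.add_one_le_exp (max 0 (c * (corr v v' / n)))]
      _ = Real.exp (max 0 (β * (t * corr v v'))) := by
          rw [← Real.exp_nat_mul, mul_max_of_nonneg _ _ (Nat.cast_nonneg n₁), mul_zero]
          congr 2
          rw [hβ, ht]
          field_simp
          rw [sq, hss]
      _ ≤ _ := by
          rw [neg_mul]; exact exp_max_le hβ0 (by linarith)
  have hcard : (Fintype.card (Fin n → Bool) : ℝ) = 2 ^ n := by simp
  rw [hcard]
  have hinner : ∀ v : Fin n → Bool, ∑ v', gG n c v v' ^ n₁ * (1 + 4 * ε ^ 2) ^ n₂ ≤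
      (1 + 1 / 16) * 2 ^ n := by
    intro v
    rw [← Finset.sum_mul]
    have h3 : ∑ v', gG n c v v' ^ n₁ ≤ (1 + 4 * β) * 2 ^ n := by
      refine (Finset.sum_le_sum fun v' _ => hG v v').trans ?_
      rw [Finset.sum_add_distrib, ← Finset.mul_sum, Finset.sum_add_distrib]
      have h4 := sum_exp_corr_le hn v t ht2
      have h5 := sum_exp_corr_le hn v (-t) (by rw [neg_sq]; exact ht2)
      simp only [Finset.sum_const, Finset.card_univ, nsmul_eq_mul, mul_one, hcard]
      nlinarith
    have hp : (0 : ℝ) < 2 ^ n := by positivity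
    calc _ ≤ (1 + 4 * β) * 2 ^ n * (50 / 49) := by gcongr
      _ ≤ _ := by nlinarith
  refine (Finset.sum_le_sum fun v _ => hinner v).trans (le_of_eq ?_)
  simp only [Finset.sum_const, Finset.card_univ, nsmul_eq_mul, hcard]
  ring

end ChiSquare

/-! ### Marginals of the emission-action matrix, and the operator norm -/

section Marginal
variable {S O A : Type} [Fintype S] [Fintype O] [Fintype A] {H : ℕ}

lemma sum_fin_cons {O : Type} [Fintype O] (m : ℕ) (F : O → (Fin m → O) → ℝ) :
    ∑ ω : Fin (m + 1) → O, F (ω 0) (fun i => ω i.succ) = ∑ o, ∑ ω, F o ω := by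
  rw [← (Fin.consEquiv (fun _ : Fin (m + 1) => O)).sum_comp, Fintype.sum_prod_type]
  simp [Fin.consEquiv]

/-- The first observation of a window has the one-step emission law. -/
lemma sum_emitActProb_mul (M : POMDP S O A H) (m : ℕ) : ∀ (h : ℕ) (s : S)
    (a : Fin (m + 1 - 1) → A) (f : O → ℝ),
    ∑ ω : Fin (m + 1) → O, M.emitActProb (m + 1) h s ω a * f (ω 0) =
      ∑ o, M.emit h s o * f o := by
  induction m with
  | zero =>
    intro h s a f
    have := sum_fin_cons (O := O) 0 (fun o _ => M.emit h s o * f o)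
    simpa [POMDP.emitActProb] using this
  | succ m ih =>
    intro h s a f
    simp only [POMDP.emitActProb]
    rw [sum_fin_cons (m + 1) (fun o ω => M.emit h s o * (∑ s', M.trans h s (a ⟨0, Nat.succ_pos m⟩) s' *
      M.emitActProb (m + 1) (h + 1) s' ω (fun i => a i.succ)) * f o)]
    refine Finset.sum_congr rfl fun o _ => ?_
    have h1 : ∀ s', ∑ ω : Fin (m + 1) → O,
        M.emitActProb (m + 1) (h + 1) s' ω (fun i => a i.succ) = 1 := by
      intro s'
      have := ih (h + 1) s' (fun i => a i.succ) (fun _ => 1)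
      simpa [M.emit_sum] using this
    rw [← Finset.sum_mul, ← Finset.mul_sum, Finset.sum_comm]
    simp only [← Finset.mul_sum, h1, mul_one, M.trans_sum]

/-- The joint law of the first two observations of a window. -/
lemma sum_emitActProb_mul₂ (M : POMDP S O A H) (m : ℕ) (h : ℕ) (s : S)
    (a : Fin (m + 2 - 1) → A) (F : O → O → ℝ) :
    ∑ ω : Fin (m + 2) → O, M.emitActProb (m + 2) h s ω a * F (ω 0) (ω 1) =
      ∑ o, M.emit h s o * ∑ s', M.trans h s (a ⟨0, Nat.succ_pos m⟩) s' *
        ∑ o', M.emit (h + 1) s' o' * F o o' := by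
  simp only [POMDP.emitActProb]
  have hc := sum_fin_cons (m + 1) (fun o ω => M.emit h s o *
    (∑ s', M.trans h s (a ⟨0, Nat.succ_pos m⟩) s' *
      M.emitActProb (m + 1) (h + 1) s' ω (fun i => a i.succ)) * F o (ω 0))
  refine Eq.trans hc ?_
  refine Finset.sum_congr rfl fun o _ => ?_
  simp only [mul_assoc, ← Finset.mul_sum]
  congr 1
  simp only [Finset.sum_mul]
  rw [Finset.sum_comm]
  refine Finset.sum_congr rfl fun s' _ => ?_
  simp only [mul_assoc, ← Finset.mul_sum]
  rw [sum_emitActProb_mul]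

/-- If each column of `B` has `ℓ¹` norm at most `w a`, Cauchy–Schwarz over the action sequences
bounds the operator norm by the Euclidean norm of `w`. -/
lemma opNorm_bound {ι κ : Type} [Fintype ι] [Fintype κ]
    (B : Matrix S (ι × κ) ℝ) (w : κ → ℝ) {C : ℝ}
    (hB : ∀ p, ∑ s, |B s p| ≤ w p.2) (hC : √(∑ a, w a ^ 2) ≤ C) : opNormStarOne B ≤ C := by
  unfold opNormStarOne
  refine csSup_le ⟨_, 0, by simp [starNorm], rfl⟩ ?_
  rintro y ⟨x, hx, rfl⟩
  calc ∑ s, |B.mulVec x s| ≤ ∑ s, ∑ p, |B s p| * |x p| := by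
        refine Finset.sum_le_sum fun s _ => ?_
        refine (Finset.abs_sum_le_sum_abs _ _).trans (le_of_eq ?_)
        simp [abs_mul]
    _ = ∑ p, (∑ s, |B s p|) * |x p| := by
        rw [Finset.sum_comm]; simp only [Finset.sum_mul]
    _ ≤ ∑ p : ι × κ, w p.2 * |x p| :=
        Finset.sum_le_sum fun p _ => mul_le_mul_of_nonneg_right (hB p) (abs_nonneg _)
    _ = ∑ a, w a * ∑ ω, |x (ω, a)| := by
        rw [Fintype.sum_prod_type, Finset.sum_comm]; simp only [Finset.mul_sum]
    _ ≤ √(∑ a, w a ^ 2) * √(∑ a, (∑ ω, |x (ω, a)|) ^ 2) :=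
        Real.sum_mul_le_sqrt_mul_sqrt _ _ _
    _ ≤ √(∑ a, w a ^ 2) * 1 := by gcongr; exact hx
    _ ≤ C := by rwa [mul_one]

end Marginal

/-! ### The revealing property -/

section Reveal
variable {k nh L r n A : ℕ}

/-- The agreement of a signal with the secret signs; `0` for other observations. -/
def chiO {X : ℕ} (v : Fin n → Bool) : Ob X n → ℝ
  | .inr (.inl (i, d)) => sg d * sg (v i)
  | _ => 0

/-- Indicator of the signals. -/
def isSigO {X : ℕ} : Ob X n → ℝ
  | .inr (.inl _) => 1
  | _ => 0

/-- An unbiased estimator of the indicator of state `s` at step `h` from the observations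
at steps `h` and `h + 1`, when the action at step `h` is below `r`. Two observations are needed for a
coin state only. -/
def decO (v : Fin n → Bool) (σ : ℝ) : St (2 ^ k) → Ob (2 ^ k) n → Ob (2 ^ k) n → ℝ
  | .inl x, o, _ => pt (.inl x) o
  | .inr (.inl b), o, o' => pt blankO o * (1 / 2 + sg b * chiO v o' / (2 * σ))
  | .inr (.inr (.inl b)), o, _ => isSigO o * (1 / 2 + sg b * chiO v o / (2 * σ))
  | .inr (.inr (.inr _)), o, _ => pt deadO o

lemma emK_reg (H : ℕ) (v : Fin n → Bool) (σ : ℝ) (h : ℕ) (x : Fin (2 ^ k)) :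
    emK H v σ h (.inl x) = pt (.inl x) := rfl
lemma emK_mix (H : ℕ) (v : Fin n → Bool) (σ : ℝ) (h : ℕ) (b : Bool) :
    emK (k := k) H v σ h (.inr (.inl b)) = if h = H then finO (sg b / 2) else pt blankO := rfl
lemma emK_sig (H : ℕ) (v : Fin n → Bool) (σ : ℝ) (h : ℕ) (b : Bool) :
    emK (k := k) H v σ h (.inr (.inr (.inl b))) = sigO v (sg b * σ) := rfl
lemma emK_dead (H : ℕ) (v : Fin n → Bool) (σ : ℝ) (h : ℕ) (u : Unit) :
    emK (k := k) H v σ h (.inr (.inr (.inr u))) = pt deadO := rfl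

lemma sum_sigO_chi (hn : 0 < n) {X : ℕ} (v : Fin n → Bool) (δ : ℝ) :
    ∑ o : Ob X n, sigO v δ o * chiO v o = δ := by
  rw [sum_sigO_mul]
  have hn' : (n : ℝ) ≠ 0 := by exact_mod_cast hn.ne'
  have : ∀ i : Fin n, ∑ d : Bool, (1 + δ * (sg d * sg (v i))) / (2 * n) *
      chiO (X := X) v (.inr (.inl (i, d))) = δ / n := by
    intro i
    have h := sg_sq (v i)
    simp only [chiO, Fintype.univ_bool, Finset.mem_singleton, Bool.true_eq_false, not_false_eq_true,
      Finset.sum_insert, Finset.sum_singleton, sg_true, sg_false]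
    field_simp
    linear_combination 2 * δ * h
  rw [Finset.sum_congr rfl fun i _ => this i]
  simp; field_simp

lemma sum_sigO_aff (hn : 0 < n) {X : ℕ} (v : Fin n → Bool) {σ : ℝ} (hσ : σ ≠ 0) (b c : Bool) :
    ∑ o : Ob X n, sigO v (sg c * σ) o * (1 / 2 + sg b * chiO v o / (2 * σ)) =
      if b = c then 1 else 0 := by
  have h1 := sum_sigO_chi (X := X) hn v (sg c * σ)
  have h2 := sum_sigO (X := X) hn v (sg c * σ)
  have : ∑ o : Ob X n, sigO v (sg c * σ) o * (1 / 2 + sg b * chiO v o / (2 * σ)) =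
      1 / 2 * ∑ o : Ob X n, sigO v (sg c * σ) o +
      sg b / (2 * σ) * ∑ o : Ob X n, sigO v (sg c * σ) o * chiO v o := by
    rw [Finset.mul_sum, Finset.mul_sum, ← Finset.sum_add_distrib]
    refine Finset.sum_congr rfl fun o _ => by ring
  rw [this, h1, h2]
  cases b <;> cases c <;> simp <;> field_simp <;> norm_num

/-- The estimator `decO` is unbiased. -/
lemma dec_left_inv (H : ℕ) (hn : 0 < n) (v : Fin n → Bool) {σ : ℝ} (hσ : σ ≠ 0)
    (θ : Theta k nh L r A) (ε : ℝ) {h : ℕ} (hh : h ≠ H) {a : Fin A} (ha : a.1 < r)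
    (s t : St (2 ^ k)) :
    ∑ o, emK H v σ h t o * ∑ t', trK θ ε h t a t' *
      ∑ o', emK H v σ (h + 1) t' o' * decO v σ s o o' = if s = t then 1 else 0 := by
  -- outside the blank observation the decoder ignores the second observation
  have hconst : ∀ (o : Ob (2 ^ k) n) (c : ℝ), (∀ o', decO v σ s o o' = c) →
      ∑ t', trK θ ε h t a t' * ∑ o', emK H v σ (h + 1) t' o' * decO v σ s o o' = c := by
    intro o c hc
    simp only [hc, ← Finset.sum_mul, emK_sum H hn, one_mul, trK_sum]
  rcases t with x | b | b | u
  · simp only [emK_reg, emK_dead, sum_pt_mul]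
    rw [hconst]
    intro o'
    rcases s with y | c | c | w <;> simp [decO, pt, isSigO, blankO, deadO, eq_comm]
  · simp only [emK_mix, emK_sig, hh, if_false, sum_pt_mul, trK, ha, if_true, sum_sigD_mul]
    rcases s with y | c | c | w
    · simp [decO, pt, blankO]
    · simp only [decO, pt, if_true, one_mul]
      have h1 := sum_sigO_aff (X := 2 ^ k) hn v hσ c true
      have h2 := sum_sigO_aff (X := 2 ^ k) hn v hσ c false
      rw [h1, h2]
      cases b <;> cases c <;> norm_num
    · simp [decO, isSigO, blankO]
    · simp [decO, pt, blankO, deadO]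
  · have key : ∀ o : Ob (2 ^ k) n, sigO v (sg b * σ) o *
        ∑ t', trK θ ε h (.inr (.inr (.inl b))) a t' *
          ∑ o', emK H v σ (h + 1) t' o' * decO v σ s o o' =
        sigO v (sg b * σ) o * decO v σ s o o := by
      intro o
      rcases o with y | ⟨i, d⟩ | w
      · simp [sigO]
      · congr 1
        apply hconst
        intro o'
        rcases s with y | c | c | w <;> simp [decO, pt, blankO]
      · simp [sigO]
    simp only [emK_sig]
    rw [Finset.sum_congr rfl fun o _ => key o]
    rcases s with y | c | c | w
    · simp only [sum_sigO_mul]; simp [decO, pt]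
    · simp only [sum_sigO_mul]; simp [decO, pt, blankO]
    · have h1 := sum_sigO_aff (X := 2 ^ k) hn v hσ c b
      rw [sum_sigO_mul] at h1 ⊢
      simp only [decO, isSigO, one_mul]
      rw [h1]; simp
    · simp only [sum_sigO_mul]; simp [decO, pt, deadO]
  · simp only [emK_reg, emK_dead, sum_pt_mul]
    rw [hconst]
    intro o'
    rcases s with y | c | c | w <;> simp [decO, pt, isSigO, blankO, deadO]

lemma chi_abs {X : ℕ} (v : Fin n → Bool) (o : Ob X n) : |chiO v o| ≤ 1 := by
  rcases o with y | ⟨i, d⟩ | w <;> simp [chiO]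
  exact le_of_eq (by simp [abs_sg])

lemma pair_abs {σ c : ℝ} (hσ : 0 < σ) (hσ1 : σ ≤ 1) (hc : |c| ≤ 1) :
    |1 / 2 + sg true * c / (2 * σ)| + |1 / 2 + sg false * c / (2 * σ)| ≤ 1 / σ := by
  obtain ⟨h1, h2⟩ := abs_le.1 hc
  have h3 : 1 ≤ 1 / σ := by rw [le_div_iff₀ hσ]; linarith
  have h4 : c / (2 * σ) ≤ 1 / σ / 2 := by rw [div_div, mul_comm σ]; gcongr
  have h5 : -(1 / σ / 2) ≤ c / (2 * σ) := by
    rw [div_div, mul_comm σ, ← neg_div]; gcongr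
  simp only [sg_true, sg_false, one_mul, neg_one_mul, neg_div]
  rcases abs_cases (1 / 2 + c / (2 * σ)) with ⟨e1, _⟩ | ⟨e1, _⟩ <;>
  rcases abs_cases (1 / 2 + -(c / (2 * σ))) with ⟨e2, _⟩ | ⟨e2, _⟩ <;>
  rw [e1, e2] <;> linarith

lemma dec_abs (v : Fin n → Bool) {σ : ℝ} (hσ : 0 < σ) (hσ1 : σ ≤ 1) (o o' : Ob (2 ^ k) n) :
    ∑ s, |decO v σ s o o'| ≤ 1 / σ := by
  have h3 : 1 ≤ 1 / σ := by rw [le_div_iff₀ hσ]; linarith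
  have h4 : 0 ≤ 1 / σ := by positivity
  rw [Fintype.sum_sum_type, Fintype.sum_sum_type, Fintype.sum_sum_type]
  simp only [Fintype.univ_bool, Finset.mem_singleton, Bool.true_eq_false, not_false_eq_true,
      Finset.sum_insert, Finset.sum_singleton, decO, abs_mul, ← mul_add]
  have p1 := pair_abs hσ hσ1 (chi_abs v o)
  have p2 := pair_abs hσ hσ1 (chi_abs v o')
  rcases o with y | ⟨i, d⟩ | w
  · simpa [pt, isSigO, blankO, deadO, apply_ite abs] using h3
  · simp only [isSigO, abs_one, one_mul]
    simpa [pt, blankO, deadO] using p1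
  · fin_cases w
    · simp only [isSigO]
      simpa [pt, blankO, deadO] using p2
    · simpa [pt, isSigO, blankO, deadO] using h3
    · simpa [pt, isSigO, blankO, deadO] using h4

lemma sum_lt_r (hr : r ≤ A) (c : ℝ) : ∑ a : Fin A, (if a.1 < r then c else 0) = r * c := by
  rw [← Finset.sum_filter, Finset.sum_const, nsmul_eq_mul]
  congr 2
  have : (Finset.univ.filter fun a : Fin A => a.1 < r) =
      Finset.univ.map (Fin.castLEEmb hr) := by
    ext a
    simp only [Finset.mem_filter, Finset.mem_univ, true_and, Finset.mem_map]
    exact ⟨fun h => ⟨⟨a.1, h⟩, rfl⟩, by rintro ⟨b, rfl⟩; exact b.2⟩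
  rw [this]; simp

lemma sum_first_lt (m : ℕ) (hr : r ≤ A) (c : ℝ) :
    ∑ a : Fin (m + 1) → Fin A, (if (a 0).1 < r then c else 0) = r * (A : ℝ) ^ m * c := by
  rw [sum_fin_cons m (fun (o : Fin A) _ => if o.1 < r then c else 0)]
  simp only [Finset.sum_const, Finset.card_univ, Fintype.card_pi, Fintype.card_fin,
    Finset.prod_const, nsmul_eq_mul, ← Finset.mul_sum, sum_lt_r hr]
  push_cast; ring

variable {S' O' : Type} [Fintype S'] [Fintype O']

/-- Averaging the decoder over the `N = r * A ^ m` action sequences that begin with a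
reveal gives a left inverse of norm at most `N⁻¹ * √N / σ = 1 / α`. -/
theorem hardM_revealing (e : S' ≃ St (2 ^ k)) (eo : O' ≃ Ob (2 ^ k) n) (hn : 0 < n) {σ : ℝ}
    (hσ : |σ| ≤ 1) (θ : Theta k nh L r A) (v : Fin n → Bool) {ε : ℝ} (hε : |ε| ≤ 1 / 2)
    (hr0 : 0 < r) (hr : r < A) {m : ℕ} (hm : m + 2 ≤ k + nh + L + 1) {α : ℝ} (hα : 0 < α)
    (hσ0 : 0 < σ) (hσα : σ ^ 2 * (r * (A : ℝ) ^ m) = α ^ 2) :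
    (hardM e eo hn hσ θ v hε).IsRevealing (m + 2) α := by
  classical
  intro h hh
  rw [Finset.mem_Icc] at hh
  have hne : h ≠ k + nh + L + 1 := by omega
  set N : ℝ := r * (A : ℝ) ^ m with hN
  have hr0' : (0 : ℝ) < r := by exact_mod_cast hr0
  have hA0 : (0 : ℝ) < A := by exact_mod_cast (show 0 < A by omega)
  have hN0 : 0 < N := by positivity
  have hcount : ∀ c : ℝ, ∑ a : Fin (m + 2 - 1) → Fin A,
      (if (a ⟨0, Nat.succ_pos m⟩).1 < r then c else 0) = N * c :=
    fun c => sum_first_lt m hr.le c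
  -- the decoder applied to the first two observations, averaged over the revealing sequences
  let B : Matrix S' ((Fin (m + 2) → O') × (Fin (m + 2 - 1) → Fin A)) ℝ := fun s p =>
    if (p.2 ⟨0, Nat.succ_pos m⟩).1 < r then 1 / N * decO v σ (e s) (eo (p.1 0)) (eo (p.1 1)) else 0
  refine ⟨B, ?_, ?_⟩
  · intro c _
    have : B * (hardM e eo hn hσ θ v hε).emitActMatrix h (m + 2) = 1 := by
      ext s t
      rw [Matrix.mul_apply, Fintype.sum_prod_type, Finset.sum_comm]
      have : ∀ a : Fin (m + 2 - 1) → Fin A,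
          ∑ ω : Fin (m + 2) → O', B s (ω, a) *
            (hardM e eo hn hσ θ v hε).emitActMatrix h (m + 2) (ω, a) t =
          if (a ⟨0, Nat.succ_pos m⟩).1 < r then 1 / N * (if s = t then 1 else 0) else 0 := by
        intro a
        by_cases ha : (a ⟨0, Nat.succ_pos m⟩).1 < r
        · simp only [B, ha, if_true, POMDP.emitActMatrix, Matrix.of_apply]
          have h1 := sum_emitActProb_mul₂ (hardM e eo hn hσ θ v hε) m h t a
            (fun o o' => decO v σ (e s) (eo o) (eo o'))
          simp only [mul_assoc, ← Finset.mul_sum]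
          congr 1
          rw [Finset.sum_congr rfl fun ω _ => mul_comm _ _, h1]
          have h2 := dec_left_inv (k + nh + L + 1) hn v hσ0.ne' θ ε hne ha (e s) (e t)
          simp only [hardM]
          rw [eo.sum_comp (fun o => emK (k + nh + L + 1) v σ h (e t) o *
            ∑ s', trK θ ε h (e t) (a ⟨0, Nat.succ_pos m⟩) (e s') *
            ∑ o', emK (k + nh + L + 1) v σ (h + 1) (e s') (eo o') * decO v σ (e s) o (eo o'))]
          simp only [e.injective.eq_iff] at h2
          rw [← h2]
          refine Finset.sum_congr rfl fun o _ => ?_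
          congr 1
          rw [e.sum_comp (fun s' => trK θ ε h (e t) (a ⟨0, Nat.succ_pos m⟩) s' *
            ∑ o', emK (k + nh + L + 1) v σ (h + 1) s' (eo o') * decO v σ (e s) o (eo o'))]
          refine Finset.sum_congr rfl fun s' _ => ?_
          congr 1
          rw [eo.sum_comp (fun o' => emK (k + nh + L + 1) v σ (h + 1) s' o' *
            decO v σ (e s) o o')]
        · simp only [B, ha, if_false, zero_mul, Finset.sum_const_zero]
      rw [Finset.sum_congr rfl fun a _ => this a, hcount, Matrix.one_apply]
      field_simp
    rw [this, Matrix.one_mulVec]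
  · refine opNorm_bound B
      (fun a => if (a ⟨0, Nat.succ_pos m⟩).1 < r then 1 / N * (1 / σ) else 0) ?_ ?_
    · rintro ⟨ω, a⟩
      by_cases ha : (a ⟨0, Nat.succ_pos m⟩).1 < r
      · simp only [B, ha, if_true, abs_mul, ← Finset.mul_sum]
        rw [abs_of_pos (by positivity : 0 < 1 / N)]
        gcongr
        rw [e.sum_comp (fun s => |decO v σ s (eo (ω 0)) (eo (ω 1))|)]
        exact dec_abs v hσ0 ((le_abs_self σ).trans hσ) _ _
      · simp only [B, ha, if_false, abs_zero, Finset.sum_const_zero, le_refl]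
    · have : ∀ a : Fin (m + 2 - 1) → Fin A,
          (if (a ⟨0, Nat.succ_pos m⟩).1 < r then 1 / N * (1 / σ) else 0) ^ 2 =
          if (a ⟨0, Nat.succ_pos m⟩).1 < r then (1 / N * (1 / σ)) ^ 2 else 0 := by
        intro a; split_ifs <;> simp
      simp only [this]
      rw [hcount]
      apply Real.sqrt_le_iff.2
      refine ⟨by positivity, le_of_eq ?_⟩
      rw [div_pow, ← hσα]
      field_simp

end Reveal

/-! ### Choice of parameters -/

section Parameters

/-- The bias `ε`: as large as the budgets for finishing (`ε² ≲ D / T`) and for revealing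
(`ε³ ≲ P / T`) allow. Then `ε T` dominates the minimum in the lower bound. -/
lemma eps_choice {T P D Q R : ℝ} (hT : 1 ≤ T) (hP : 0 < P) (hD : 0 < D) (hQ0 : 0 ≤ Q)
    (hQ : Q ≤ 9600 * P) (hR : R ≤ 480 * D) :
    ∃ ε : ℝ, 0 < ε ∧ ε ≤ 1 / 20 ∧ ε ^ 2 ≤ D / (3200 * T) ∧ ε ^ 3 ≤ P / T ∧
      min (Q ^ ((1 : ℝ) / 3) * T ^ ((2 : ℝ) / 3)) (min (√(R * T)) T) ≤ 1300 * (ε * T) := by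
  have hT0 : 0 < T := by linarith
  have hc : 0 < (P / T) ^ ((1 : ℝ) / 3) := Real.rpow_pos_of_pos (by positivity) _
  have hs : 0 < √(D / (3200 * T)) := Real.sqrt_pos.2 (by positivity)
  set ε := min (1 / 20) (min √(D / (3200 * T)) ((P / T) ^ ((1 : ℝ) / 3))) with hε
  have hε0 : 0 < ε := lt_min (by norm_num) (lt_min hs hc)
  have h1 : ε ≤ 1 / 20 := min_le_left _ _
  have h2 : ε ≤ √(D / (3200 * T)) := (min_le_right _ _).trans (min_le_left _ _)
  have h3 : ε ≤ (P / T) ^ ((1 : ℝ) / 3) := (min_le_right _ _).trans (min_le_right _ _)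
  refine ⟨ε, hε0, h1, ?_, ?_, ?_⟩
  · calc ε ^ 2 ≤ √(D / (3200 * T)) ^ 2 := by gcongr
      _ = _ := Real.sq_sqrt (by positivity)
  · calc ε ^ 3 ≤ ((P / T) ^ ((1 : ℝ) / 3)) ^ 3 := by gcongr
      _ = P / T := by
        rw [← Real.rpow_natCast, ← Real.rpow_mul (by positivity)]; norm_num
  · rw [hε, min_mul_of_nonneg _ _ hT0.le, min_mul_of_nonneg _ _ hT0.le,
      mul_min_of_nonneg _ _ (by norm_num), mul_min_of_nonneg _ _ (by norm_num)]
    refine le_min ?_ (le_min ?_ ?_)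
    · refine ((min_le_right _ _).trans (min_le_right _ _)).trans ?_
      linarith
    · refine ((min_le_right _ _).trans (min_le_left _ _)).trans ?_
      apply Real.sqrt_le_iff.2
      refine ⟨by positivity, ?_⟩
      rw [mul_pow, mul_pow, Real.sq_sqrt (by positivity)]
      have : D / (3200 * T) * T ^ 2 = D * T / 3200 := by field_simp
      rw [this]
      nlinarith [mul_le_mul_of_nonneg_right hR hT0.le, mul_pos hD hT0]
    · refine (min_le_left _ _).trans ?_
      have e1 : T ^ ((2 : ℝ) / 3) = T * (1 / T) ^ ((1 : ℝ) / 3) := by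
        rw [one_div, Real.inv_rpow hT0.le, ← Real.rpow_neg hT0.le]
        conv_rhs => rw [← Real.rpow_one T, ← Real.rpow_mul hT0.le, ← Real.rpow_add hT0]
        norm_num
      have e2 : Q ^ ((1 : ℝ) / 3) * (1 / T) ^ ((1 : ℝ) / 3) ≤ 1300 * (P / T) ^ ((1 : ℝ) / 3) := by
        rw [← Real.mul_rpow hQ0 (by positivity)]
        have e3 : (1300 : ℝ) = (1300 ^ 3) ^ ((1 : ℝ) / 3) := by
          rw [← Real.rpow_natCast, ← Real.rpow_mul (by positivity)]; norm_num
        rw [e3, ← Real.mul_rpow (by norm_num) (by positivity)]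
        apply Real.rpow_le_rpow (by positivity) _ (by norm_num)
        rw [mul_one_div, ← mul_div_assoc]
        gcongr
        linarith
      rw [e1]
      nlinarith [mul_le_mul_of_nonneg_right e2 hT0.le]

lemma half_floor {x : ℝ} (hx : 1 ≤ x) : 0 < ⌊x⌋₊ ∧ x / 2 ≤ (⌊x⌋₊ : ℝ) ∧ (⌊x⌋₊ : ℝ) ≤ x := by
  have h1 : 1 ≤ ⌊x⌋₊ := Nat.one_le_floor_iff x |>.2 hx
  have h2 : (1 : ℝ) ≤ (⌊x⌋₊ : ℝ) := by exact_mod_cast h1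
  refine ⟨h1, ?_, Nat.floor_le (by linarith)⟩
  linarith [Nat.lt_floor_add_one x]

lemma card_free {A r : ℕ} : Fintype.card {a : Fin A // r ≤ a.1} = A - r := by
  have f : {a : Fin A // r ≤ a.1} ≃ Fin (A - r) :=
    { toFun := fun a => ⟨a.1.1 - r, by have := a.1.2; have := a.2; omega⟩
      invFun := fun b => ⟨⟨b.1 + r, by have := b.2; omega⟩, by simp⟩
      left_inv := fun a => by
        have := a.2
        ext
        simp only
        omega
      right_inv := fun b => by ext; simp }
  rw [Fintype.card_congr f, Fintype.card_fin]

/-- Password letters: the `A - A / 3` actions left after removing the reveals still give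
`A ^ (5 / 8)` choices each. -/
lemma pow_base {A : ℕ} (hA : 3 ≤ A) : A ^ 5 ≤ (A - A / 3) ^ 8 := by
  obtain ⟨K, hK⟩ : ∃ K, K = A - A / 3 := ⟨_, rfl⟩
  rw [← hK]
  have h1 : 2 * A ≤ 3 * K := by omega
  have h2 : 6561 * A ^ 5 ≤ 6561 * K ^ 8 := by
    calc 6561 * A ^ 5 ≤ 256 * A ^ 3 * A ^ 5 := by
          gcongr
          calc 6561 ≤ 256 * 3 ^ 3 := by norm_num
            _ ≤ _ := by gcongr
      _ = (2 * A) ^ 8 := by ring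
      _ ≤ (3 * K) ^ 8 := by gcongr
      _ = _ := by ring
  omega

/-- A password of length at least `4 H / 5` has at least `A ^ (H / 2)` values. -/
lemma pow_seq {A L H : ℕ} (hA : 3 ≤ A) (hL : 4 * H ≤ 5 * L) :
    (A : ℝ) ^ ((H : ℝ) / 2) ≤ ((A - A / 3 : ℕ) : ℝ) ^ L := by
  have h1 : 1 ≤ A - A / 3 := by omega
  have hn : A ^ (5 * H) ≤ (A - A / 3) ^ (10 * L) := by
    calc A ^ (5 * H) = (A ^ 5) ^ H := by rw [pow_mul]
      _ ≤ ((A - A / 3) ^ 8) ^ H := Nat.pow_le_pow_left (pow_base hA) H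
      _ = (A - A / 3) ^ (8 * H) := by rw [pow_mul]
      _ ≤ _ := Nat.pow_le_pow_right h1 (by omega)
  have hA0 : (0 : ℝ) ≤ A := by positivity
  refine le_of_pow_le_pow_left₀ (n := 10) (by norm_num) (by positivity) ?_
  calc ((A : ℝ) ^ ((H : ℝ) / 2)) ^ 10 = (A : ℝ) ^ (5 * H) := by
        rw [← Real.rpow_natCast, ← Real.rpow_mul hA0, ← Real.rpow_natCast]
        congr 1; push_cast; ring
    _ ≤ ((A - A / 3 : ℕ) : ℝ) ^ (10 * L) := by exact_mod_cast hn
    _ = _ := by rw [← pow_mul, mul_comm]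

end Parameters

/-! ### The lower bound -/

section Assembly

set_option maxHeartbeats 1000000 in
/-- The lower bound for the family consisting of the null instance and all `hardM θ v ε`, with
the numbers of registers, entry steps, password letters and signals given up to constants. -/
theorem family_bound {m k nh L n A S O : ℕ} (hS : S ≤ 8 * 2 ^ k) (hO : O ≤ 16 * n) (hn : 0 < n)
    (hA : 3 ≤ A) (hnh : k + nh + L + 1 ≤ 20 * nh) (hL : 4 * (k + nh + L + 1) ≤ 5 * L)
    (hm : m + 2 ≤ k + nh + L + 1) {α : ℝ} (hα : 0 < α) (hα1 : α ≤ 0.1) {T : ℕ} (hT : 1 ≤ T)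
    {S' O' : Type} [Fintype S'] [Fintype O'] (e : S' ≃ St (2 ^ k)) (eo : O' ≃ Ob (2 ^ k) n) :
    ∃ ℳ : Set (POMDP S' O' (Fin A) (k + nh + L + 1)), ℳ.Finite ∧
      (∀ M ∈ ℳ, M.IsRevealing (m + 2) α) ∧
      ∀ 𝔄 : Algorithm O' (Fin A) (k + nh + L + 1), ∃ M ∈ ℳ,
        1 / 16640000 *
          min (((S : ℝ) * √O * (A : ℝ) ^ (m + 2) * ((k + nh + L + 1 : ℕ) : ℝ) / α ^ 2) ^
              ((1 : ℝ) / 3) * (T : ℝ) ^ ((2 : ℝ) / 3))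
            (min (√((S : ℝ) * (A : ℝ) ^ (((k + nh + L + 1 : ℕ) : ℝ) / 2) *
              ((k + nh + L + 1 : ℕ) : ℝ) * T)) (T : ℝ)) ≤ M.expRegret 𝔄 T := by
  obtain ⟨H, hH⟩ : ∃ H, H = k + nh + L + 1 := ⟨_, rfl⟩
  obtain ⟨r, hr⟩ : ∃ r, r = A / 3 := ⟨_, rfl⟩
  have hr0 : 0 < r := by omega
  have hrA : r < A := by omega
  have hr5 : (A : ℝ) ≤ 5 * r := by exact_mod_cast (show A ≤ 5 * r by omega)
  have hA0 : (0 : ℝ) < A := by exact_mod_cast (show 0 < A by omega)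
  have hA1 : (1 : ℝ) ≤ A := by exact_mod_cast (show 1 ≤ A by omega)
  have hr0' : (1 : ℝ) ≤ r := by exact_mod_cast hr0
  have hT1 : (1 : ℝ) ≤ T := by exact_mod_cast hT
  have hT0 : (0 : ℝ) < T := by linarith
  have hnh0 : 0 < nh := by omega
  -- the noise level `σ` makes the decoder norm exactly `1 / α`
  set N : ℝ := r * (A : ℝ) ^ m with hN
  have hN1 : 1 ≤ N := one_le_mul_of_one_le_of_one_le hr0' (one_le_pow₀ hA1)
  have hN0 : 0 < N := by linarith
  set σ : ℝ := α / √N with hσ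
  have hσ0 : 0 < σ := div_pos hα (Real.sqrt_pos.2 hN0)
  have hσα : σ ^ 2 * N = α ^ 2 := by
    rw [hσ, div_pow, Real.sq_sqrt hN0.le]; field_simp
  have hσ1 : σ ≤ 1 := by
    rw [hσ, div_le_one (Real.sqrt_pos.2 hN0)]
    have : 1 ≤ √N := Real.one_le_sqrt.2 hN1
    norm_num at hα1
    linarith
  have hσabs : |σ| ≤ 1 := by rwa [abs_of_pos hσ0]
  have hσsq : σ ^ 2 ≤ 1 := pow_le_one₀ hσ0.le hσ1
  -- sizes of the index sets
  set Nn : ℝ := (Fintype.card ((Fin nh × Fin (2 ^ k)) × Fin (A - 2)) : ℝ) with hNn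
  have hNnN : Nn = (nh : ℝ) * 2 ^ k * ((A - 2 : ℕ) : ℝ) := by
    rw [hNn]; simp [Fintype.card_prod]
  have hnhR : (H : ℝ) ≤ 20 * nh := by rw [hH]; exact_mod_cast hnh
  have hSR : (S : ℝ) ≤ 8 * 2 ^ k := by exact_mod_cast hS
  have hAR : (A : ℝ) ≤ 3 * ((A - 2 : ℕ) : ℝ) := by
    exact_mod_cast (show A ≤ 3 * (A - 2) by omega)
  have hNnge : (H : ℝ) * S * A ≤ 480 * Nn := by
    calc (H : ℝ) * S * A ≤ (20 * nh) * (8 * 2 ^ k) * (3 * ((A - 2 : ℕ) : ℝ)) := by gcongr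
      _ = 480 * Nn := by rw [hNnN]; ring
  have hNn1 : 1 ≤ Nn := by
    rw [hNn]
    have : 0 < Fintype.card ((Fin nh × Fin (2 ^ k)) × Fin (A - 2)) := by
      simp only [Fintype.card_prod, Fintype.card_fin]
      have : 0 < A - 2 := by omega
      positivity
    exact_mod_cast this
  have hNn0 : 0 < Nn := by linarith
  set D : ℝ := (Fintype.card (Theta k nh L r A) : ℝ) with hD
  have hDN : D = Nn * ((A - A / 3 : ℕ) : ℝ) ^ L := by
    rw [hD, hNn, ← hr]
    rw [Fintype.card_prod, Fintype.card_fun, card_free, Fintype.card_fin]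
    push_cast; rfl
  have hL3 : 3 ≤ L := by omega
  have hD8 : 8 ≤ D := by
    have h2 : (2 : ℝ) ≤ ((A - A / 3 : ℕ) : ℝ) := by
      exact_mod_cast (show 2 ≤ A - A / 3 by omega)
    have h8 : (8 : ℝ) ≤ ((A - A / 3 : ℕ) : ℝ) ^ L := by
      calc (8 : ℝ) = 2 ^ 3 := by norm_num
        _ ≤ 2 ^ L := pow_le_pow_right₀ (by norm_num) hL3
        _ ≤ _ := by gcongr
    rw [hDN]
    nlinarith
  have hD8' : 8 ≤ Fintype.card (Theta k nh L r A) := by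
    rw [hD] at hD8; exact_mod_cast hD8
  have hDge : (S : ℝ) * (A : ℝ) ^ ((H : ℝ) / 2) * H ≤ 480 * D := by
    have h1 : (A : ℝ) ^ ((H : ℝ) / 2) ≤ ((A - A / 3 : ℕ) : ℝ) ^ L :=
      pow_seq hA (by rw [hH]; exact hL)
    have h2 : (H : ℝ) * S ≤ 480 * Nn := by
      refine le_trans ?_ hNnge
      exact le_mul_of_one_le_right (by positivity) hA1
    calc (S : ℝ) * (A : ℝ) ^ ((H : ℝ) / 2) * H = (H : ℝ) * S * (A : ℝ) ^ ((H : ℝ) / 2) := by ring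
      _ ≤ 480 * Nn * ((A - A / 3 : ℕ) : ℝ) ^ L := by gcongr
      _ = 480 * D := by rw [hDN]; ring
  have hn1 : (1 : ℝ) ≤ √n := Real.one_le_sqrt.2 (by exact_mod_cast hn)
  have hOn : √O ≤ 4 * √n := by
    apply Real.sqrt_le_iff.2
    refine ⟨by positivity, ?_⟩
    rw [mul_pow, Real.sq_sqrt (by positivity)]
    have : (O : ℝ) ≤ 16 * n := by exact_mod_cast hO
    linarith
  set P : ℝ := Nn * √n / σ ^ 2 with hP
  have hP0 : 0 < P := by positivity
  have hQ : (S : ℝ) * √O * (A : ℝ) ^ (m + 2) * H / α ^ 2 ≤ 9600 * P := by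
    rw [← hσα, hP, ← mul_div_assoc, div_le_div_iff₀ (by positivity) (by positivity)]
    calc (S : ℝ) * √O * (A : ℝ) ^ (m + 2) * H * σ ^ 2
        = ((H : ℝ) * S * A) * √O * (A * (A : ℝ) ^ m) * σ ^ 2 := by ring
      _ ≤ (480 * Nn) * (4 * √n) * ((5 * r) * (A : ℝ) ^ m) * σ ^ 2 := by gcongr
      _ = 9600 * (Nn * √n) * (σ ^ 2 * N) := by rw [hN]; ring
  obtain ⟨ε, hε0, hε20, hε2, hε3, hmin⟩ := eps_choice (T := (T : ℝ)) hT1 hP0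
    (by linarith : 0 < D) (by positivity) hQ hDge
  have hεh : |ε| ≤ 1 / 2 := by rw [abs_of_pos hε0]; linarith
  have hεsq : ε ^ 2 ≤ 1 / 400 := by
    calc ε ^ 2 ≤ (1 / 20) ^ 2 := by gcongr
      _ = 1 / 400 := by norm_num
  have hε2p : 0 < ε ^ 2 := by positivity
  have hx1 : 1 ≤ √n / (400 * ε ^ 2 * σ ^ 2) := by
    rw [le_div_iff₀ (by positivity)]
    have := mul_le_mul hεsq hσsq (by positivity) (by norm_num)
    linarith
  have hx2 : 1 ≤ 1 / (200 * ε ^ 2) := by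
    rw [le_div_iff₀ (by positivity)]; linarith
  -- budgets: `n₁` right reveals and `n₂` right passwords leave the mixture close to the null
  obtain ⟨hn₁, hn₁l, hn₁u⟩ := half_floor hx1
  obtain ⟨hn₂, hn₂l, hn₂u⟩ := half_floor hx2
  set n₁ := ⌊√n / (400 * ε ^ 2 * σ ^ 2)⌋₊
  set n₂ := ⌊1 / (200 * ε ^ 2)⌋₊
  have hχ := chi2_bound hn (c := (2 * ε * σ) ^ 2) (ε := ε) (by positivity) (n₁ := n₁) (n₂ := n₂)
    (by
      calc (n₁ : ℝ) * (2 * ε * σ) ^ 2 ≤ √n / (400 * ε ^ 2 * σ ^ 2) * (2 * ε * σ) ^ 2 := by gcongr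
        _ = √n / 100 := by field_simp; norm_num)
    (by
      calc 4 * ε ^ 2 * (n₂ : ℝ) ≤ 4 * ε ^ 2 * (1 / (200 * ε ^ 2)) := by gcongr
        _ = 1 / 50 := by field_simp; norm_num)
  have hDn : 8 * (T : ℝ) ≤ D * n₂ := by
    rw [le_div_iff₀ (by positivity)] at hε2
    calc 8 * (T : ℝ) ≤ D * (1 / (200 * ε ^ 2) / 2) := by
          rw [div_div, mul_one_div, le_div_iff₀ (by positivity)]; linarith
      _ ≤ _ := by gcongr
  have hB1 : ε * T / 12800 ≤ Nn * n₁ / 16 := by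
    rw [le_div_iff₀ hT0, hP, le_div_iff₀ (by positivity)] at hε3
    calc ε * T / 12800 ≤ Nn * (√n / (400 * ε ^ 2 * σ ^ 2) / 2) / 16 := by
          rw [div_div, ← mul_div_assoc, div_div, le_div_iff₀ (by positivity)]
          linarith
      _ ≤ _ := by gcongr
  have hB2 : ε * T / 12800 ≤ 3 / 8 * ε * T := by linarith [mul_pos hε0 hT0]
  obtain ⟨θ₀⟩ : Nonempty (Theta k nh L r A) := Fintype.card_pos_iff.1 (by omega)
  let v₀ : Fin n → Bool := fun _ => true
  refine ⟨insert (hardM e eo hn hσabs θ₀ v₀ abs_zero_half)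
    (Set.range fun p : Theta k nh L r A × (Fin n → Bool) => hardM e eo hn hσabs p.1 p.2 hεh),
    (Set.finite_range _).insert _, ?_, ?_⟩
  · rintro M (rfl | ⟨p, rfl⟩)
    · exact hardM_revealing e eo hn hσabs θ₀ v₀ _ hr0 hrA hm hα hσ0 hσα
    · exact hardM_revealing e eo hn hσabs p.1 p.2 _ hr0 hrA hm hα hσ0 hσα
  · intro 𝔄
    have hle : 1 / 16640000 * min (((S : ℝ) * √O * (A : ℝ) ^ (m + 2) * H / α ^ 2) ^
              ((1 : ℝ) / 3) * (T : ℝ) ^ ((2 : ℝ) / 3))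
            (min (√((S : ℝ) * (A : ℝ) ^ ((H : ℝ) / 2) * H * T)) (T : ℝ)) ≤ ε * T / 12800 := by
      linarith
    rw [hH] at hle
    rcases core_apply e eo hn hσabs θ₀ v₀ hεh hA hrA (by omega) 𝔄 hn₁ hn₂ hε0.le hχ T hNn hNn0
      hD8' hDn hB1 hB2 with h | ⟨θ, v, h⟩
    · exact ⟨_, Or.inl rfl, hle.trans h⟩
    · exact ⟨_, Or.inr ⟨(θ, v), rfl⟩, hle.trans h⟩

end Assembly

/-- **`Ω(T^{2/3})` regret lower bound for multi-step revealing POMDPs** (Theorem 4.1).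
There is an absolute constant `c₀ > 0` such that for all `m ≥ 2`, `O ≥ S ≥ 8`, `A ≥ 3`,
`H ≥ 8 log₂ S + 2m`, `α ∈ (0, 0.1]` and `T ≥ 1`, there is a finite family `ℳ` of `m`-step
`α`-revealing POMDPs with `|𝒮| ≤ S`, `|𝒪| ≤ O`, `|𝒜| = A` such that every `T`-episode
algorithm suffers expected regret at least
`(c₀/m) · min{ (S·√O·A^m·H/α²)^{1/3}·T^{2/3}, (S·A^{H/2}·H·T)^{1/2}, T }`
on some member of `ℳ`. -/
theorem multi_step_revealing_regret_lower_bound :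
    ∃ c₀ : ℝ, 0 < c₀ ∧
      ∀ (m S O A H : ℕ), 2 ≤ m → 8 ≤ S → S ≤ O → 3 ≤ A →
        8 * Real.logb 2 S + 2 * m ≤ (H : ℝ) →
        ∀ α : ℝ, 0 < α → α ≤ 0.1 →
        ∀ T : ℕ, 1 ≤ T →
        ∃ (σ ω : ℕ), 0 < σ ∧ σ ≤ S ∧ 0 < ω ∧ ω ≤ O ∧
          ∃ ℳ : Set (POMDP (Fin σ) (Fin ω) (Fin A) H),
            ℳ.Finite ∧
            (∀ M ∈ ℳ, M.IsRevealing m α) ∧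
            ∀ 𝔄 : Algorithm (Fin ω) (Fin A) H,
              ∃ M ∈ ℳ,
                (c₀ / m) *
                    min
                      (((S : ℝ) * Real.sqrt O * (A : ℝ) ^ m * H / α ^ 2) ^ ((1 : ℝ) / 3) *
                        (T : ℝ) ^ ((2 : ℝ) / 3))
                      (min (Real.sqrt ((S : ℝ) * (A : ℝ) ^ ((H : ℝ) / 2) * H * T)) (T : ℝ)) ≤
                  M.expRegret 𝔄 T := by
  refine ⟨1 / 16640000, by norm_num, ?_⟩
  intro m S O A H hm hS hSO hA hH α hα hα1 T hT
  -- `2 ^ (k + 2) ≤ S < 2 ^ (k + 3)`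
  have hlog3 : 3 ≤ Nat.log 2 S := Nat.le_log_of_pow_le (by norm_num) (by omega)
  obtain ⟨k, hk⟩ : ∃ k, Nat.log 2 S = k + 2 := ⟨Nat.log 2 S - 2, by omega⟩
  have hS1 : 4 * 2 ^ k ≤ S := by
    have := Nat.pow_log_le_self 2 (show S ≠ 0 by omega)
    rw [hk] at this; rw [pow_add] at this; omega
  have hS2 : S ≤ 8 * 2 ^ k := by
    have := Nat.lt_pow_succ_log_self (b := 2) (by norm_num) S
    rw [hk, Nat.succ_eq_add_one, pow_add, pow_add] at this; omega
  have hHk : 8 * (k + 2) + 2 * m ≤ H := by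
    have h1 : ((k + 2 : ℕ) : ℝ) ≤ Real.logb 2 S := by
      rw [← hk]; exact Real.natLog_le_logb S 2
    have h2 : ((8 * (k + 2) + 2 * m : ℕ) : ℝ) ≤ (H : ℝ) := by
      push_cast at h1 ⊢; linarith
    exact_mod_cast h2
  -- the observations number `2 ^ k + 2 n + 3 ≤ O`; the register part takes `k + nh` steps,
  -- of which `nh ≈ H / 20` can hold the hidden location, and the password `L ≥ 4 H / 5`
  obtain ⟨n, hn⟩ : ∃ n, n = O / 8 := ⟨_, rfl⟩
  obtain ⟨nh, hnh⟩ : ∃ nh, nh = H / 20 + 1 := ⟨_, rfl⟩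
  obtain ⟨L, hL⟩ : ∃ L, H = k + nh + L + 1 := ⟨H - 1 - k - nh, by omega⟩
  obtain ⟨m, rfl⟩ : ∃ m', m = m' + 2 := ⟨m - 2, by omega⟩
  have b1 : H ≤ 20 * nh := by omega
  have b2 : 4 * H ≤ 5 * L := by omega
  have b3 : m + 2 ≤ H := by omega
  clear hH hHk hnh
  subst hL
  have cS : Fintype.card (St (2 ^ k)) = 2 ^ k + 5 := by simp [St]
  have cO : Fintype.card (Ob (2 ^ k) n) = 2 ^ k + (2 * n + 3) := by simp [Ob]; ring
  obtain ⟨ℳ, hfin, hrev, hreg⟩ := family_bound (m := m) (O := O) hS2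
    (show O ≤ 16 * n by omega) (show 0 < n by omega) hA b1 b2 b3 hα hα1 hT
    (Fintype.equivFin (St (2 ^ k))).symm (Fintype.equivFin (Ob (2 ^ k) n)).symm
  refine ⟨_, _, ?_, ?_, ?_, ?_, ℳ, hfin, hrev, fun 𝔄 => ?_⟩
  · rw [cS]; omega
  · rw [cS]; omega
  · rw [cO]; omega
  · rw [cO]; omega
  · obtain ⟨M, hM, hle⟩ := hreg 𝔄
    refine ⟨M, hM, le_trans ?_ hle⟩
    refine mul_le_mul_of_nonneg_right ?_ (by positivity)
    exact div_le_self (by norm_num) (by push_cast; linarith [(Nat.cast_nonneg m : (0 : ℝ) ≤ m)])
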